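/- arXiv:2205.08532 — 2 statements merged into one kernel-verified Lean document; each statement's English description precedes it below -/
import Mathlib

section
/- (Fingerprinting lemma for exponential families, single coordinate.) Fix j ∈ [k] and fix all coordinates η_{−j} of the natural parameter. Suppose the interval I_j = [η⁽¹⁾_j, η⁽²⁾_j] is non-degenerate and η_j ∼ Uniform(I_j). Then for every measurable function f_j : S^n → [−R_j/2, R_j/2] applied to a dataset X = (X₁,…,X_n) ∼ p_η^{⊗n}, one has E_{η_j, X}[ Z^j + (f_j(X) − (η_j − m_j))² ] ≥ R_j²/12, where Z^j = [R_j²/4 − (η_j − m_j)²]·[f_j(X) − (η_j − m_j)]·Σ_{i=1}^n (T_j(X_i) − μ_{T,j}). -/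
open MeasureTheory Matrix Set

noncomputable section

/-- The log-partition function of the exponential family `ℰ(T, h)` on `S ⊆ ℝ^d`:
`Z(η) = ln ∫_S h(x)·exp(η^⊤ T(x)) dx`. -/
def logPartition {d k : ℕ} (S : Set (Fin d → ℝ)) (h : (Fin d → ℝ) → ℝ)
    (T : (Fin d → ℝ) → Fin k → ℝ) (η : Fin k → ℝ) : ℝ :=
  Real.log (∫ x in S, h x * Real.exp (η ⬝ᵥ T x))

/-- The member `p_η` of the exponential family `ℰ(T, h)` on `S ⊆ ℝ^d`, with Lebesgue
density `x ↦ h(x)·exp(η^⊤ T(x) − Z(η))` on `S` (and `0` off `S`). -/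
def expFam {d k : ℕ} (S : Set (Fin d → ℝ)) (h : (Fin d → ℝ) → ℝ)
    (T : (Fin d → ℝ) → Fin k → ℝ) (η : Fin k → ℝ) : Measure (Fin d → ℝ) :=
  volume.withDensity fun x =>
    ENNReal.ofReal (S.indicator (fun y => h y * Real.exp (η ⬝ᵥ T y - logPartition S h T η)) x)

/-- `μ_T = E_{X ∼ p_η}[T(X)]`, the mean of the sufficient statistics. -/
def suffMean {d k : ℕ} (S : Set (Fin d → ℝ)) (h : (Fin d → ℝ) → ℝ)
    (T : (Fin d → ℝ) → Fin k → ℝ) (η : Fin k → ℝ) : Fin k → ℝ :=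
  fun j => ∫ x, T x j ∂(expFam S h T η)

/-- `Σ_T = Cov_{X ∼ p_η}(T(X))`, the covariance matrix of the sufficient statistics. -/
def suffCov {d k : ℕ} (S : Set (Fin d → ℝ)) (h : (Fin d → ℝ) → ℝ)
    (T : (Fin d → ℝ) → Fin k → ℝ) (η : Fin k → ℝ) : Matrix (Fin k) (Fin k) ℝ :=
  Matrix.of fun j₁ j₂ =>
    ∫ x, (T x j₁ - suffMean S h T η j₁) * (T x j₂ - suffMean S h T η j₂) ∂(expFam S h T η)

/-- The uniform probability measure on the interval `[a, b]`. -/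
def unif (a b : ℝ) : Measure ℝ :=
  (ENNReal.ofReal (b - a))⁻¹ • volume.restrict (Set.Icc a b)

/-!
Centre the interval at its midpoint `m`, let `r` be its half-length and put `u = η_j - m`. Along
the line through `η₀` in direction `j` the law of a sample `X` is the exponential tilt of the law
at `m` by `u * Y`, where `Y X = ∑ i, T_j (X_i)`. Hence the score identity
`d/du E_u[f] = Cov_u(f, Y)`, which turns `E_u[Z^j]` into `(r² - u²) * d/du E_u[f]`. As the weight
`r² - u²` vanishes at both endpoints, integrating by parts gives `∫ 2u E_u[f] du`, which is exactly
the term that cancels the cross term of `E_u[(f - u)²]`. What remains is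
`∫ (E_u[f²] + u²) du ≥ 2r³/3`, and dividing by the length `2r` gives `r²/3 = R_j²/12`.
-/

section Density

open scoped ENNReal

variable {α : Type*} [MeasurableSpace α] {μ ν : Measure α}

lemma withDensity_mono_left (hμν : μ ≤ ν) (g : α → ℝ≥0∞) :
    μ.withDensity g ≤ ν.withDensity g :=
  Measure.le_iff.2 fun s hs => by
    simpa only [withDensity_apply _ hs] using
      lintegral_mono' (Measure.restrict_mono le_rfl hμν) le_rfl

-- Neither `h` nor `S` is assumed measurable, so Mathlib's `withDensity_mul` does not apply to the
-- density of `expFam`: the carrier density is replaced by a measurable minorant instead.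
lemma withDensity_withDensity_le [SFinite μ] {f : α → ℝ≥0∞} (hf : ∀ x, f x ≠ ∞)
    (g : α → ℝ≥0∞) : (μ.withDensity f).withDensity g ≤ μ.withDensity (f * g) := by
  obtain ⟨f', hf'_meas, hf'_le, hf'⟩ := exists_measurable_le_withDensity_eq (μ := μ) f
  rw [← hf']
  refine Measure.le_iff.2 fun s hs => ?_
  rw [withDensity_apply _ hs, withDensity_apply _ hs,
    setLIntegral_withDensity_eq_setLIntegral_mul_non_measurable _ hf'_meas _ hs
      (ae_of_all _ fun x => (hf'_le x).trans_lt (hf x).lt_top)]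
  exact lintegral_mono fun x => mul_le_mul_left (hf'_le x) (g x)

lemma withDensity_withDensity_of_aemeasurable [SFinite μ] {f g : α → ℝ≥0∞} (hf : ∀ x, f x ≠ ∞)
    (hg_zero : ∀ x, g x ≠ 0) (hg_top : ∀ x, g x ≠ ∞)
    (hg : AEMeasurable g (μ.withDensity (f * g))) :
    (μ.withDensity f).withDensity g = μ.withDensity (f * g) := by
  refine le_antisymm (withDensity_withDensity_le hf g) ?_
  have hfg_top (x : α) : (f * g) x ≠ ∞ := ENNReal.mul_ne_top (hf x) (hg_top x)
  have hfg_inv : f * g * g⁻¹ = f := by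
    ext x
    simp [mul_assoc, ENNReal.mul_inv_cancel (hg_zero x) (hg_top x)]
  calc μ.withDensity (f * g)
      = ((μ.withDensity (f * g)).withDensity g⁻¹).withDensity g := by
        simpa using (withDensity_inv_same₀ hg.inv (ae_of_all _ fun x => by simp [hg_top x])
          (ae_of_all _ fun x => by simp [hg_zero x])).symm
    _ ≤ (μ.withDensity f).withDensity g :=
        withDensity_mono_left ((withDensity_withDensity_le hfg_top g⁻¹).trans_eq
          (by rw [hfg_inv])) g

lemma withDensity_ofReal_exp_sub_eq_tilted {g : α → ℝ} {c : ℝ} (hg : AEMeasurable g μ)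
    (h : IsProbabilityMeasure (μ.withDensity fun x => ENNReal.ofReal (Real.exp (g x - c)))) :
    μ.withDensity (fun x => ENNReal.ofReal (Real.exp (g x - c))) = μ.tilted g := by
  have h_lintegral : ∫⁻ x, ENNReal.ofReal (Real.exp (g x - c)) ∂μ = 1 := by
    rw [← setLIntegral_univ, ← withDensity_apply _ MeasurableSet.univ, h.measure_univ]
  have h_integral : ∫ x, Real.exp (g x) ∂μ = Real.exp c := by
    have : ∫ x, Real.exp (g x - c) ∂μ = 1 := by
      rw [integral_eq_lintegral_of_nonneg_ae (ae_of_all _ fun x => (Real.exp_pos _).le)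
        (by fun_prop), h_lintegral, ENNReal.toReal_one]
    simpa [Real.exp_sub, integral_div, div_eq_one_iff_eq] using this
  simp only [Measure.tilted, h_integral, Real.exp_sub]

end Density

section ExpFam

variable {d k : ℕ} {S : Set (Fin d → ℝ)} {h : (Fin d → ℝ) → ℝ} {T : (Fin d → ℝ) → Fin k → ℝ}
  {η η' : Fin k → ℝ}

lemma expFam_eq_withDensity_mul (S : Set (Fin d → ℝ)) (h : (Fin d → ℝ) → ℝ)
    (T : (Fin d → ℝ) → Fin k → ℝ) (η η' : Fin k → ℝ) :
    expFam S h T η' = volume.withDensity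
      ((fun x => ENNReal.ofReal
          (S.indicator (fun y => h y * Real.exp (η ⬝ᵥ T y - logPartition S h T η)) x)) *
        fun x => ENNReal.ofReal (Real.exp ((η' - η) ⬝ᵥ T x
          - (logPartition S h T η' - logPartition S h T η)))) := by
  unfold expFam
  congr 1 with x
  rw [Pi.mul_apply, ← ENNReal.ofReal_mul' (Real.exp_pos _).le]
  by_cases hx : x ∈ S
  · rw [indicator_of_mem hx, indicator_of_mem hx, mul_assoc, ← Real.exp_add, sub_dotProduct]
    ring_nf
  · rw [indicator_of_notMem hx, indicator_of_notMem hx, zero_mul]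

lemma expFam_eq_tilted (hη' : IsProbabilityMeasure (expFam S h T η'))
    (hT : AEMeasurable (fun x => (η' - η) ⬝ᵥ T x) (expFam S h T η))
    (hT' : AEMeasurable (fun x => (η' - η) ⬝ᵥ T x) (expFam S h T η')) :
    expFam S h T η' = (expFam S h T η).tilted fun x => (η' - η) ⬝ᵥ T x := by
  set c := logPartition S h T η' - logPartition S h T η
  have h_density : expFam S h T η' = (expFam S h T η).withDensity
      fun x => ENNReal.ofReal (Real.exp ((η' - η) ⬝ᵥ T x - c)) := by
    rw [expFam_eq_withDensity_mul S h T η η'] at hT' ⊢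
    exact (withDensity_withDensity_of_aemeasurable (fun _ => ENNReal.ofReal_ne_top)
      (fun _ => (ENNReal.ofReal_pos.2 (Real.exp_pos _)).ne') (fun _ => ENNReal.ofReal_ne_top)
      (by fun_prop)).symm
  rw [h_density] at hη' ⊢
  exact withDensity_ofReal_exp_sub_eq_tilted hT hη'

end ExpFam

section PiTilted

variable {ι : Type*} [Fintype ι] {α : ι → Type*} [∀ i, MeasurableSpace (α i)]

lemma pi_tilted (μ : ∀ i, Measure (α i)) [∀ i, SigmaFinite (μ i)] (f : ∀ i, α i → ℝ) :
    Measure.pi (fun i => (μ i).tilted (f i)) =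
      (Measure.pi μ).tilted fun X => ∑ i, f i (X i) := by
  refine Measure.pi_eq fun s hs => ?_
  have h_rectangle : ∫ X in univ.pi s, Real.exp (∑ i, f i (X i)) ∂Measure.pi μ =
      ∏ i, ∫ x in s i, Real.exp (f i x) ∂μ i := by
    simp only [Real.exp_sum, Measure.restrict_pi_pi]
    exact integral_fintype_prod_eq_prod fun i x => Real.exp (f i x)
  have h_univ : ∫ X, Real.exp (∑ i, f i (X i)) ∂Measure.pi μ =
      ∏ i, ∫ x, Real.exp (f i x) ∂μ i := by
    simp only [Real.exp_sum]
    exact integral_fintype_prod_eq_prod fun i x => Real.exp (f i x)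
  simp only [tilted_apply_eq_ofReal_integral' _ (MeasurableSet.univ_pi hs),
    tilted_apply_eq_ofReal_integral' _ (hs _), integral_div, h_rectangle, h_univ,
    ← Finset.prod_div_distrib]
  exact ENNReal.ofReal_prod_of_nonneg fun i _ => by positivity

end PiTilted

section ExpIntegral

variable {Ω E : Type*} [MeasurableSpace Ω] [NormedAddCommGroup E] [NormedSpace ℝ E]
  {Q : Measure Ω} {Y : Ω → ℝ} {g : Ω → E} {a b t : ℝ}

lemma exp_mul_le_exp_mul_add_exp_mul (ht : t ∈ Icc a b) (y : ℝ) :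
    Real.exp (t * y) ≤ Real.exp (a * y) + Real.exp (b * y) := by
  rcases le_total 0 y with hy | hy
  · have : Real.exp (t * y) ≤ Real.exp (b * y) := by gcongr; exact ht.2
    linarith [Real.exp_pos (a * y)]
  · have : Real.exp (t * y) ≤ Real.exp (a * y) :=
      Real.exp_le_exp.2 (mul_le_mul_of_nonpos_right ht.1 hy)
    linarith [Real.exp_pos (b * y)]

lemma norm_exp_mul_smul_le (ht : t ∈ Icc a b) (y : ℝ) (x : E) :
    ‖Real.exp (t * y) • x‖ ≤ (Real.exp (a * y) + Real.exp (b * y)) * ‖x‖ := by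
  rw [norm_smul, Real.norm_eq_abs, Real.abs_exp]
  gcongr
  exact exp_mul_le_exp_mul_add_exp_mul ht y

lemma integrable_exp_mul_add_exp_mul_mul_norm
    (ha : Integrable (fun ω => Real.exp (a * Y ω) • g ω) Q)
    (hb : Integrable (fun ω => Real.exp (b * Y ω) • g ω) Q) :
    Integrable (fun ω => (Real.exp (a * Y ω) + Real.exp (b * Y ω)) * ‖g ω‖) Q := by
  refine (ha.norm.add hb.norm).congr (ae_of_all _ fun ω => ?_)
  simp [norm_smul, add_mul]

lemma aestronglyMeasurable_exp_mul_smul (hY : AEMeasurable Y Q)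
    (ha : Integrable (fun ω => Real.exp (a * Y ω) • g ω) Q) (t : ℝ) :
    AEStronglyMeasurable (fun ω => Real.exp (t * Y ω) • g ω) Q := by
  have h_smul : AEStronglyMeasurable
      (fun ω => Real.exp ((t - a) * Y ω) • Real.exp (a * Y ω) • g ω) Q :=
    AEStronglyMeasurable.smul (by fun_prop) ha.aestronglyMeasurable
  refine h_smul.congr (ae_of_all _ fun ω => ?_)
  simp only [smul_smul, ← Real.exp_add]
  ring_nf

lemma integrable_exp_mul_smul_of_mem_Icc (hY : AEMeasurable Y Q)
    (ha : Integrable (fun ω => Real.exp (a * Y ω) • g ω) Q)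
    (hb : Integrable (fun ω => Real.exp (b * Y ω) • g ω) Q) (ht : t ∈ Icc a b) :
    Integrable (fun ω => Real.exp (t * Y ω) • g ω) Q :=
  (integrable_exp_mul_add_exp_mul_mul_norm ha hb).mono'
    (aestronglyMeasurable_exp_mul_smul hY ha t)
    (ae_of_all _ fun ω => norm_exp_mul_smul_le ht (Y ω) (g ω))

lemma continuousOn_integral_exp_mul_smul (hY : AEMeasurable Y Q)
    (ha : Integrable (fun ω => Real.exp (a * Y ω) • g ω) Q)
    (hb : Integrable (fun ω => Real.exp (b * Y ω) • g ω) Q) :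
    ContinuousOn (fun t => ∫ ω, Real.exp (t * Y ω) • g ω ∂Q) (Icc a b) :=
  continuousOn_of_dominated (fun t _ => aestronglyMeasurable_exp_mul_smul hY ha t)
    (fun _ ht => ae_of_all _ fun ω => norm_exp_mul_smul_le ht (Y ω) (g ω))
    (integrable_exp_mul_add_exp_mul_mul_norm ha hb)
    (ae_of_all _ fun ω => by fun_prop)

lemma hasDerivAt_integral_exp_mul_smul (hY : AEMeasurable Y Q)
    (ha : Integrable (fun ω => Real.exp (a * Y ω) • g ω) Q)
    (hb : Integrable (fun ω => Real.exp (b * Y ω) • g ω) Q)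
    (ha' : Integrable (fun ω => Real.exp (a * Y ω) • Y ω • g ω) Q)
    (hb' : Integrable (fun ω => Real.exp (b * Y ω) • Y ω • g ω) Q) (ht : t ∈ Ioo a b) :
    HasDerivAt (fun t => ∫ ω, Real.exp (t * Y ω) • g ω ∂Q)
      (∫ ω, Real.exp (t * Y ω) • Y ω • g ω ∂Q) t := by
  refine (hasDerivAt_integral_of_dominated_loc_of_deriv_le (Icc_mem_nhds ht.1 ht.2)
    (Filter.Eventually.of_forall (aestronglyMeasurable_exp_mul_smul hY ha))
    (integrable_exp_mul_smul_of_mem_Icc hY ha hb (Ioo_subset_Icc_self ht))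
    (aestronglyMeasurable_exp_mul_smul hY ha' t)
    (ae_of_all _ fun ω s hs => norm_exp_mul_smul_le hs (Y ω) (Y ω • g ω))
    (integrable_exp_mul_add_exp_mul_mul_norm ha' hb') (ae_of_all _ fun ω s _ => ?_)).2
  simpa [smul_smul] using ((hasDerivAt_mul_const (Y ω)).exp.smul_const (g ω) : HasDerivAt _ _ s)

end ExpIntegral

section TiltedFamily

open ProbabilityTheory

variable {Ω E : Type*} [MeasurableSpace Ω] [NormedAddCommGroup E] [NormedSpace ℝ E]
  {Q : Measure Ω} {f Y : Ω → ℝ} {g : Ω → E} {a b t : ℝ}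

lemma integral_tilted_mul_eq_inv_mgf_smul (t : ℝ) :
    ∫ ω, g ω ∂Q.tilted (t * Y ·) = (mgf Y Q t)⁻¹ • ∫ ω, Real.exp (t * Y ω) • g ω ∂Q := by
  simp only [integral_tilted_mul_eq_mgf, ← integral_smul, smul_smul, div_eq_inv_mul]

lemma mgf_eq_integral_exp_mul_smul_one : mgf Y Q = fun t => ∫ ω, Real.exp (t * Y ω) • 1 ∂Q := by
  ext t
  simp [mgf]

variable (ha : Integrable (fun ω => Real.exp (a * Y ω)) Q)
  (hb : Integrable (fun ω => Real.exp (b * Y ω)) Q)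

include ha hb in
lemma integrable_tilted_mul_of_mem_Icc (hY : AEMeasurable Y Q)
    (hga : Integrable g (Q.tilted (a * Y ·))) (hgb : Integrable g (Q.tilted (b * Y ·)))
    (ht : t ∈ Icc a b) : Integrable g (Q.tilted (t * Y ·)) := by
  rw [integrable_tilted_iff (integrable_exp_mul_of_le_of_le ha hb ht.1 ht.2)]
  exact integrable_exp_mul_smul_of_mem_Icc hY ((integrable_tilted_iff ha g).1 hga)
    ((integrable_tilted_iff hb g).1 hgb) ht

include ha hb in
lemma continuousOn_mgf_Icc (hY : AEMeasurable Y Q) : ContinuousOn (mgf Y Q) (Icc a b) := by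
  rw [mgf_eq_integral_exp_mul_smul_one]
  exact continuousOn_integral_exp_mul_smul hY (by simpa using ha) (by simpa using hb)

include ha hb in
lemma continuousOn_integral_tilted_mul [NeZero Q] (hY : AEMeasurable Y Q)
    (hga : Integrable g (Q.tilted (a * Y ·))) (hgb : Integrable g (Q.tilted (b * Y ·))) :
    ContinuousOn (fun t => ∫ ω, g ω ∂Q.tilted (t * Y ·)) (Icc a b) := by
  simp only [integral_tilted_mul_eq_inv_mgf_smul]
  exact ((continuousOn_mgf_Icc ha hb hY).inv₀ fun t ht =>
      (mgf_pos' (NeZero.ne Q) (integrable_exp_mul_of_le_of_le ha hb ht.1 ht.2)).ne').smul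
    (continuousOn_integral_exp_mul_smul hY ((integrable_tilted_iff ha g).1 hga)
      ((integrable_tilted_iff hb g).1 hgb))

lemma covariance_eq_integral_mul_sub {P : Measure Ω} [IsProbabilityMeasure P]
    (hf : Integrable f P) (hY : Integrable Y P) (hYf : Integrable (fun ω => Y ω * f ω) P) :
    cov[f, Y; P] = ∫ ω, Y ω * f ω ∂P - (∫ ω, Y ω ∂P) * ∫ ω, f ω ∂P := by
  have h_expand (ω : Ω) : (f ω - P[f]) * (Y ω - P[Y]) =
      Y ω * f ω - P[Y] * f ω - P[f] * Y ω + P[f] * P[Y] := by ring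
  simp only [covariance, h_expand]
  rw [integral_add (by fun_prop) (by fun_prop), integral_sub (by fun_prop) (by fun_prop),
    integral_sub (by fun_prop) (by fun_prop), integral_const_mul, integral_const_mul,
    integral_const, probReal_univ]
  ring

lemma integral_mul_sub_integral_add_sq_sub {P : Measure Ω} [IsProbabilityMeasure P]
    (hf : MemLp f 2 P) (hY : Integrable Y P) (hYf : Integrable (fun ω => Y ω * f ω) P)
    (K u : ℝ) :
    ∫ ω, (K * (f ω - u) * (Y ω - ∫ ω', Y ω' ∂P) + (f ω - u) ^ 2) ∂P =
      K * cov[f, Y; P] + ∫ ω, (f ω - u) ^ 2 ∂P := by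
  have hf_int : Integrable f P := hf.integrable one_le_two
  have h_expand (ω : Ω) : K * (f ω - u) * (Y ω - P[Y]) =
      K * (Y ω * f ω - P[Y] * f ω - u * (Y ω - P[Y])) := by ring
  have h_sq : Integrable (fun ω => (f ω - u) ^ 2) P := (hf.sub (memLp_const u)).integrable_sq
  rw [integral_add _ h_sq,
    covariance_eq_integral_mul_sub hf_int hY hYf]
  · simp only [h_expand]
    rw [integral_const_mul, integral_sub (by fun_prop) (by fun_prop),
      integral_sub (by fun_prop) (by fun_prop), integral_const_mul, integral_const_mul,
      integral_sub hY (integrable_const _), integral_const, probReal_univ]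
    simp
  · simp only [h_expand]
    fun_prop

lemma integral_sq_sub_const {P : Measure Ω} [IsProbabilityMeasure P] (hf : Integrable f P)
    (hf_sq : Integrable (fun ω => f ω ^ 2) P) (u : ℝ) :
    ∫ ω, (f ω - u) ^ 2 ∂P = ∫ ω, f ω ^ 2 ∂P - 2 * u * ∫ ω, f ω ∂P + u ^ 2 := by
  have h_expand (ω : Ω) : (f ω - u) ^ 2 = f ω ^ 2 - 2 * u * f ω + u ^ 2 := by ring
  simp only [h_expand]
  rw [integral_add (by fun_prop) (by fun_prop), integral_sub (by fun_prop) (by fun_prop),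
    integral_const_mul, integral_const, probReal_univ, one_smul]

variable [NeZero Q]
  (hfa : Integrable f (Q.tilted (a * Y ·))) (hfb : Integrable f (Q.tilted (b * Y ·)))
  (hYa : Integrable Y (Q.tilted (a * Y ·))) (hYb : Integrable Y (Q.tilted (b * Y ·)))
  (hYfa : Integrable (fun ω => Y ω * f ω) (Q.tilted (a * Y ·)))
  (hYfb : Integrable (fun ω => Y ω * f ω) (Q.tilted (b * Y ·)))

include ha hb hfa hfb hYa hYb hYfa hYfb

lemma hasDerivAt_integral_tilted_mul (ht : t ∈ Ioo a b) :
    HasDerivAt (fun t => ∫ ω, f ω ∂Q.tilted (t * Y ·)) cov[f, Y; Q.tilted (t * Y ·)] t := by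
  have hY : AEMeasurable Y Q := aemeasurable_of_integrable_exp_mul (ht.1.trans ht.2).ne ha hb
  have ht' : t ∈ Icc a b := Ioo_subset_Icc_self ht
  have ht_exp := integrable_exp_mul_of_le_of_le ha hb ht'.1 ht'.2
  have := isProbabilityMeasure_tilted ht_exp
  have h_mgf : mgf Y Q t ≠ 0 := (mgf_pos' (NeZero.ne Q) ht_exp).ne'
  have h_num := hasDerivAt_integral_exp_mul_smul hY ((integrable_tilted_iff ha f).1 hfa)
    ((integrable_tilted_iff hb f).1 hfb) ((integrable_tilted_iff ha _).1 hYfa)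
    ((integrable_tilted_iff hb _).1 hYfb) ht
  have h_den : HasDerivAt (mgf Y Q) (∫ ω, Real.exp (t * Y ω) • Y ω ∂Q) t := by
    rw [mgf_eq_integral_exp_mul_smul_one]
    simpa using hasDerivAt_integral_exp_mul_smul (g := fun _ => (1 : ℝ)) hY (by simpa using ha)
      (by simpa using hb) (by simpa using (integrable_tilted_iff ha Y).1 hYa)
      (by simpa using (integrable_tilted_iff hb Y).1 hYb) ht
  rw [covariance_eq_integral_mul_sub (integrable_tilted_mul_of_mem_Icc ha hb hY hfa hfb ht')
    (integrable_tilted_mul_of_mem_Icc ha hb hY hYa hYb ht')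
    (integrable_tilted_mul_of_mem_Icc ha hb hY hYfa hYfb ht')]
  simp only [integral_tilted_mul_eq_inv_mgf_smul]
  refine ((h_den.inv h_mgf).smul h_num).congr_deriv ?_
  simp only [smul_eq_mul, Pi.inv_apply]
  field_simp
  ring

lemma continuousOn_covariance_tilted_mul (hY : AEMeasurable Y Q) :
    ContinuousOn (fun t => cov[f, Y; Q.tilted (t * Y ·)]) (Icc a b) := by
  refine ContinuousOn.congr ((continuousOn_integral_tilted_mul ha hb hY hYfa hYfb).sub
    ((continuousOn_integral_tilted_mul ha hb hY hYa hYb).mul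
      (continuousOn_integral_tilted_mul ha hb hY hfa hfb))) fun t ht => ?_
  have := isProbabilityMeasure_tilted (integrable_exp_mul_of_le_of_le ha hb ht.1 ht.2)
  exact covariance_eq_integral_mul_sub (integrable_tilted_mul_of_mem_Icc ha hb hY hfa hfb ht)
    (integrable_tilted_mul_of_mem_Icc ha hb hY hYa hYb ht)
    (integrable_tilted_mul_of_mem_Icc ha hb hY hYfa hYfb ht)

lemma integral_mul_covariance_tilted_mul (hab : a < b) {w w' : ℝ → ℝ}
    (hw : ∀ t ∈ Icc a b, HasDerivAt w (w' t) t) (hw' : IntervalIntegrable w' volume a b)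
    (hwa : w a = 0) (hwb : w b = 0) :
    ∫ t in a..b, w t * cov[f, Y; Q.tilted (t * Y ·)] =
      -∫ t in a..b, w' t * ∫ ω, f ω ∂Q.tilted (t * Y ·) := by
  have hY : AEMeasurable Y Q := aemeasurable_of_integrable_exp_mul hab.ne ha hb
  have h_uIcc : uIcc a b = Icc a b := uIcc_of_le hab.le
  have h_cov := continuousOn_covariance_tilted_mul ha hb hfa hfb hYa hYb hYfa hYfb hY
  have h_mean := continuousOn_integral_tilted_mul ha hb hY hfa hfb
  rw [intervalIntegral.integral_mul_deriv_eq_deriv_mul_of_hasDerivAt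
    (fun t ht => (hw t (h_uIcc ▸ ht)).continuousAt.continuousWithinAt) (h_uIcc ▸ h_mean)
    (fun t ht => hw t ?_) (fun t ht => ?_) hw' (h_uIcc ▸ h_cov).intervalIntegrable, hwa, hwb]
  · ring
  · rw [min_eq_left hab.le, max_eq_right hab.le] at ht
    exact Ioo_subset_Icc_self ht
  · rw [min_eq_left hab.le, max_eq_right hab.le] at ht
    exact hasDerivAt_integral_tilted_mul ha hb hfa hfb hYa hYb hYfa hYfb ht

end TiltedFamily

section Fingerprinting

open ProbabilityTheory

variable {Ω : Type*} [MeasurableSpace Ω] {Q : Measure Ω} {f Y : Ω → ℝ} {a b r : ℝ}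

section SqSub

variable [NeZero Q]
  (ha : Integrable (fun ω => Real.exp (a * Y ω)) Q)
  (hb : Integrable (fun ω => Real.exp (b * Y ω)) Q) (hY : AEMeasurable Y Q)
  (hfa : MemLp f 2 (Q.tilted (a * Y ·))) (hfb : MemLp f 2 (Q.tilted (b * Y ·)))

include ha hb hY hfa hfb

lemma eqOn_integral_sq_sub_tilted_mul :
    EqOn (fun u => ∫ ω, (f ω - u) ^ 2 ∂Q.tilted (u * Y ·))
      (fun u => ∫ ω, f ω ^ 2 ∂Q.tilted (u * Y ·) - 2 * u * ∫ ω, f ω ∂Q.tilted (u * Y ·) + u ^ 2)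
      (Icc a b) := by
  intro u hu
  have := isProbabilityMeasure_tilted (integrable_exp_mul_of_le_of_le ha hb hu.1 hu.2)
  exact integral_sq_sub_const (integrable_tilted_mul_of_mem_Icc ha hb hY
      (hfa.integrable one_le_two) (hfb.integrable one_le_two) hu)
    (integrable_tilted_mul_of_mem_Icc ha hb hY hfa.integrable_sq hfb.integrable_sq hu) u

lemma continuousOn_integral_sq_sub_tilted_mul :
    ContinuousOn (fun u => ∫ ω, (f ω - u) ^ 2 ∂Q.tilted (u * Y ·)) (Icc a b) := by
  refine ContinuousOn.congr ?_ (eqOn_integral_sq_sub_tilted_mul ha hb hY hfa hfb)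
  have h_mean := continuousOn_integral_tilted_mul ha hb hY (hfa.integrable one_le_two)
    (hfb.integrable one_le_two)
  have h_sq := continuousOn_integral_tilted_mul ha hb hY hfa.integrable_sq hfb.integrable_sq
  fun_prop

lemma integral_integral_sq_sub_tilted_mul (hab : a ≤ b) :
    ∫ u in a..b, ∫ ω, (f ω - u) ^ 2 ∂Q.tilted (u * Y ·) =
      (∫ u in a..b, ∫ ω, f ω ^ 2 ∂Q.tilted (u * Y ·))
        - (∫ u in a..b, 2 * u * ∫ ω, f ω ∂Q.tilted (u * Y ·)) + (b ^ 3 - a ^ 3) / 3 := by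
  have h_mean_cont := continuousOn_integral_tilted_mul ha hb hY (hfa.integrable one_le_two)
    (hfb.integrable one_le_two)
  have h_mean : IntervalIntegrable (fun u => 2 * u * ∫ ω, f ω ∂Q.tilted (u * Y ·)) volume a b :=
    ContinuousOn.intervalIntegrable_of_Icc hab (by fun_prop)
  have h_sq : IntervalIntegrable (fun u => ∫ ω, f ω ^ 2 ∂Q.tilted (u * Y ·)) volume a b :=
    (continuousOn_integral_tilted_mul ha hb hY hfa.integrable_sq
      hfb.integrable_sq).intervalIntegrable_of_Icc hab
  rw [intervalIntegral.integral_congr ((uIcc_of_le hab).symm ▸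
      eqOn_integral_sq_sub_tilted_mul ha hb hY hfa hfb),
    intervalIntegral.integral_add (h_sq.sub h_mean)
      (Continuous.intervalIntegrable (by fun_prop) _ _),
    intervalIntegral.integral_sub h_sq h_mean, integral_pow]
  norm_num

end SqSub

section TiltedInterval

variable [NeZero Q] (hr : 0 < r)
  (ha : Integrable (fun ω => Real.exp (-r * Y ω)) Q)
  (hb : Integrable (fun ω => Real.exp (r * Y ω)) Q)
  (hYa : Integrable Y (Q.tilted (-r * Y ·))) (hYb : Integrable Y (Q.tilted (r * Y ·)))
  (hYfa : Integrable (fun ω => Y ω * f ω) (Q.tilted (-r * Y ·)))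
  (hYfb : Integrable (fun ω => Y ω * f ω) (Q.tilted (r * Y ·)))

include hr ha hb hYa hYb hYfa hYfb

lemma integral_sq_sub_sq_mul_covariance_tilted_mul
    (hfa : Integrable f (Q.tilted (-r * Y ·))) (hfb : Integrable f (Q.tilted (r * Y ·))) :
    ∫ u in -r..r, (r ^ 2 - u ^ 2) * cov[f, Y; Q.tilted (u * Y ·)] =
      ∫ u in -r..r, 2 * u * ∫ ω, f ω ∂Q.tilted (u * Y ·) := by
  have h_deriv (u : ℝ) : HasDerivAt (fun u => r ^ 2 - u ^ 2) (-(2 * u)) u := by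
    simpa using (hasDerivAt_pow 2 u).const_sub (r ^ 2)
  rw [integral_mul_covariance_tilted_mul ha hb hfa hfb hYa hYb hYfa hYfb (by linarith)
    (fun u _ => h_deriv u) (Continuous.intervalIntegrable (by fun_prop) _ _) (by ring) (by ring)]
  simp only [neg_mul, intervalIntegral.integral_neg, neg_neg]

theorem fingerprinting_tilted_mul
    (hfa : MemLp f 2 (Q.tilted (-r * Y ·))) (hfb : MemLp f 2 (Q.tilted (r * Y ·))) :
    2 / 3 * r ^ 3 ≤ ∫ u in -r..r, ((r ^ 2 - u ^ 2) * cov[f, Y; Q.tilted (u * Y ·)]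
      + ∫ ω, (f ω - u) ^ 2 ∂Q.tilted (u * Y ·)) := by
  have hr' : -r < r := by linarith
  have hY : AEMeasurable Y Q := aemeasurable_of_integrable_exp_mul hr'.ne ha hb
  have hfa₁ : Integrable f (Q.tilted (-r * Y ·)) := hfa.integrable one_le_two
  have hfb₁ : Integrable f (Q.tilted (r * Y ·)) := hfb.integrable one_le_two
  have h_cov := continuousOn_covariance_tilted_mul ha hb hfa₁ hfb₁ hYa hYb hYfa hYfb hY
  have h_sq_nonneg : 0 ≤ ∫ u in -r..r, ∫ ω, f ω ^ 2 ∂Q.tilted (u * Y ·) :=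
    intervalIntegral.integral_nonneg hr'.le fun u _ => integral_nonneg fun ω => sq_nonneg _
  rw [intervalIntegral.integral_add
      (ContinuousOn.intervalIntegrable_of_Icc hr'.le (by fun_prop))
      ((continuousOn_integral_sq_sub_tilted_mul ha hb hY hfa
        hfb).intervalIntegrable_of_Icc hr'.le),
    integral_sq_sub_sq_mul_covariance_tilted_mul hr ha hb hYa hYb hYfa hYfb hfa₁ hfb₁,
    integral_integral_sq_sub_tilted_mul ha hb hY hfa hfb hr'.le]
  linarith

end TiltedInterval

lemma integrable_exp_of_neZero_tilted {α : Type*} [MeasurableSpace α] {μ : Measure α} {g : α → ℝ}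
    [NeZero (μ.tilted g)] : Integrable (fun x => Real.exp (g x)) μ :=
  not_imp_comm.1 tilted_of_not_integrable (NeZero.ne (μ.tilted g))

theorem fingerprinting_one_parameter {P : ℝ → Measure Ω} (hab : a < b)
    (hP : ∀ t ∈ Icc a b, IsProbabilityMeasure (P t))
    (hP_tilted : ∀ t ∈ Icc a b,
      P t = (P ((a + b) / 2)).tilted fun ω => (t - (a + b) / 2) * Y ω)
    (hf : ∀ t ∈ Icc a b, MemLp f 2 (P t)) (hY : ∀ t ∈ Icc a b, Integrable Y (P t))
    (hYf : ∀ t ∈ Icc a b, Integrable (fun ω => Y ω * f ω) (P t)) :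
    (b - a) ^ 3 / 12 ≤ ∫ t in a..b,
      (((b - a) ^ 2 / 4 - (t - (a + b) / 2) ^ 2) * cov[f, Y; P t]
        + ∫ ω, (f ω - (t - (a + b) / 2)) ^ 2 ∂P t) := by
  set m := (a + b) / 2 with hm
  set r := (b - a) / 2 with hr
  set Q := P m
  have hr_pos : 0 < r := by linarith
  have h_mem {u : ℝ} (hu : u ∈ Icc (-r) r) : u + m ∈ Icc a b :=
    ⟨by linarith [hu.1], by linarith [hu.2]⟩
  have h_tilted {u : ℝ} (hu : u ∈ Icc (-r) r) : P (u + m) = Q.tilted (u * Y ·) := by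
    simpa using hP_tilted _ (h_mem hu)
  have h_exp {u : ℝ} (hu : u ∈ Icc (-r) r) : Integrable (fun ω => Real.exp (u * Y ω)) Q := by
    have : IsProbabilityMeasure (Q.tilted (u * Y ·)) := h_tilted hu ▸ hP _ (h_mem hu)
    exact integrable_exp_of_neZero_tilted
  have := hP m ⟨by linarith, by linarith⟩
  have h_left : -r ∈ Icc (-r) r := left_mem_Icc.2 (by linarith)
  have h_right : r ∈ Icc (-r) r := right_mem_Icc.2 (by linarith)
  calc (b - a) ^ 3 / 12 = 2 / 3 * r ^ 3 := by ring
    _ ≤ ∫ u in -r..r, ((r ^ 2 - u ^ 2) * cov[f, Y; Q.tilted (u * Y ·)]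
          + ∫ ω, (f ω - u) ^ 2 ∂Q.tilted (u * Y ·)) :=
      fingerprinting_tilted_mul hr_pos (h_exp h_left) (h_exp h_right)
        (h_tilted h_left ▸ hY _ (h_mem h_left)) (h_tilted h_right ▸ hY _ (h_mem h_right))
        (h_tilted h_left ▸ hYf _ (h_mem h_left)) (h_tilted h_right ▸ hYf _ (h_mem h_right))
        (h_tilted h_left ▸ hf _ (h_mem h_left)) (h_tilted h_right ▸ hf _ (h_mem h_right))
    _ = ∫ u in -r..r, (((b - a) ^ 2 / 4 - (u + m - m) ^ 2) * cov[f, Y; P (u + m)]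
          + ∫ ω, (f ω - (u + m - m)) ^ 2 ∂P (u + m)) := by
      refine intervalIntegral.integral_congr fun u hu => ?_
      rw [uIcc_of_le (by linarith)] at hu
      simp only [h_tilted hu, add_sub_cancel_right, hr, div_pow]
      norm_num
    _ = _ := by
      rw [intervalIntegral.integral_comp_add_right (fun t => ((b - a) ^ 2 / 4 - (t - m) ^ 2)
        * cov[f, Y; P t] + ∫ ω, (f ω - (t - m)) ^ 2 ∂P t)]
      congr 1 <;> ring

end Fingerprinting

section Sampling

open ProbabilityTheory

variable {ι : Type*} [Fintype ι]

lemma integrable_pi_sum_eval {α : Type*} [MeasurableSpace α] {P : Measure α}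
    [IsProbabilityMeasure P] {φ : α → ℝ} (hφ : Integrable φ P) :
    Integrable (fun X => ∑ i, φ (X i)) (Measure.pi fun _ : ι => P) :=
  integrable_finsetSum _ fun _ _ => integrable_comp_eval hφ

lemma integral_pi_sum_eval {α : Type*} [MeasurableSpace α] {P : Measure α}
    [IsProbabilityMeasure P] {φ : α → ℝ} (hφ : Integrable φ P) :
    ∫ X, ∑ i, φ (X i) ∂Measure.pi (fun _ : ι => P) = Fintype.card ι * ∫ x, φ x ∂P := by
  rw [integral_finsetSum _ fun i _ => integrable_comp_eval hφ]
  simp [fun i : ι => integral_comp_eval (μ := fun _ => P) (i := i) hφ.aestronglyMeasurable]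

lemma integral_unif {a b : ℝ} (hab : a ≤ b) (F : ℝ → ℝ) :
    ∫ t, F t ∂unif a b = (b - a)⁻¹ * ∫ t in a..b, F t := by
  rw [unif, integral_smul_measure, integral_Icc_eq_integral_Ioc,
    ← intervalIntegral.integral_of_le hab, ENNReal.toReal_inv,
    ENNReal.toReal_ofReal (sub_nonneg.2 hab), smul_eq_mul]

variable {d k : ℕ} {S : Set (Fin d → ℝ)} {h : (Fin d → ℝ) → ℝ} {T : (Fin d → ℝ) → Fin k → ℝ}
  {η η₀ : Fin k → ℝ} {j : Fin k}

lemma pi_expFam_update_eq_tilted {s t : ℝ}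
    [IsProbabilityMeasure (expFam S h T (Function.update η₀ j s))]
    [IsProbabilityMeasure (expFam S h T (Function.update η₀ j t))]
    (hs : AEMeasurable (fun x => T x j) (expFam S h T (Function.update η₀ j s)))
    (ht : AEMeasurable (fun x => T x j) (expFam S h T (Function.update η₀ j t))) :
    Measure.pi (fun _ : ι => expFam S h T (Function.update η₀ j t)) =
      (Measure.pi fun _ : ι => expFam S h T (Function.update η₀ j s)).tilted
        fun X => (t - s) * ∑ i, T (X i) j := by
  have h_dot (x : Fin d → ℝ) :
      (Function.update η₀ j t - Function.update η₀ j s) ⬝ᵥ T x = (t - s) * T x j := by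
    rw [← Function.update_sub, sub_self, ← single_dotProduct, Pi.single]
  have h_tilted := expFam_eq_tilted (η := Function.update η₀ j s) (η' := Function.update η₀ j t)
    (T := T) ‹_› (by simpa only [h_dot] using hs.const_mul (t - s))
    (by simpa only [h_dot] using ht.const_mul (t - s))
  simp only [h_tilted, h_dot, pi_tilted, Finset.mul_sum]

lemma integral_pi_expFam_score_add_sq_sub [IsProbabilityMeasure (expFam S h T η)]
    (hT : Integrable (fun x => T x j) (expFam S h T η)) {f : (ι → Fin d → ℝ) → ℝ}
    (hf : MemLp f 2 (Measure.pi fun _ : ι => expFam S h T η))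
    (hTf : Integrable (fun X => (∑ i, T (X i) j) * f X) (Measure.pi fun _ => expFam S h T η))
    (K u : ℝ) :
    ∫ X, (K * (f X - u) * (∑ i, (T (X i) j - suffMean S h T η j)) + (f X - u) ^ 2)
        ∂(Measure.pi fun _ => expFam S h T η) =
      K * cov[f, fun X => ∑ i, T (X i) j; Measure.pi fun _ => expFam S h T η]
        + ∫ X, (f X - u) ^ 2 ∂(Measure.pi fun _ => expFam S h T η) := by
  rw [← integral_mul_sub_integral_add_sq_sub hf (integrable_pi_sum_eval hT) hTf,
    integral_pi_sum_eval hT]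
  simp [suffMean]

theorem fingerprinting_lemma_single_coordinate_general {a b : ℝ} (hab : a < b)
    (hprob : ∀ t ∈ Icc a b, IsProbabilityMeasure (expFam S h T (Function.update η₀ j t)))
    (hT : ∀ t ∈ Icc a b, Integrable (fun x => T x j) (expFam S h T (Function.update η₀ j t)))
    (f : (ι → Fin d → ℝ) → ℝ)
    (hf : ∀ t ∈ Icc a b,
      MemLp f 2 (Measure.pi fun _ => expFam S h T (Function.update η₀ j t)))
    (hTf : ∀ t ∈ Icc a b, Integrable (fun X => (∑ i, T (X i) j) * f X)
      (Measure.pi fun _ => expFam S h T (Function.update η₀ j t))) :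
    (b - a) ^ 2 / 12 ≤
      ∫ t, (∫ X,
          (((b - a) ^ 2 / 4 - (t - (a + b) / 2) ^ 2) * (f X - (t - (a + b) / 2)) *
              (∑ i, (T (X i) j - suffMean S h T (Function.update η₀ j t) j))
            + (f X - (t - (a + b) / 2)) ^ 2)
        ∂(Measure.pi fun _ => expFam S h T (Function.update η₀ j t)))
      ∂(unif a b) := by
  have h_mid : (a + b) / 2 ∈ Icc a b := ⟨by linarith, by linarith⟩
  have h_line := fingerprinting_one_parameter (f := f) (Y := fun X => ∑ i, T (X i) j) hab
    (P := fun t => Measure.pi fun _ => expFam S h T (Function.update η₀ j t))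
    (fun t ht => by have := hprob t ht; infer_instance)
    (fun t ht => by
      have := hprob t ht
      have := hprob _ h_mid
      exact pi_expFam_update_eq_tilted (hT _ h_mid).aemeasurable (hT t ht).aemeasurable)
    hf (fun t ht => by have := hprob t ht; exact integrable_pi_sum_eval (hT t ht)) hTf
  rw [integral_unif hab.le, inv_mul_eq_div, le_div_iff₀ (sub_pos.2 hab)]
  calc (b - a) ^ 2 / 12 * (b - a) = (b - a) ^ 3 / 12 := by ring
    _ ≤ _ := h_line
    _ = _ := intervalIntegral.integral_congr fun t ht => by
      rw [uIcc_of_le hab.le] at ht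
      have := hprob t ht
      exact (integral_pi_expFam_score_add_sq_sub (hT t ht) (hf t ht) (hTf t ht) _ _).symm

end Sampling

/-- **Fingerprinting lemma for exponential families, single coordinate.**
Fix `j` and all other coordinates `η_{-j}` of the natural parameter, and draw
`η_j ∼ Uniform(I_j)` on a non-degenerate interval `I_j = [η₁ j, η₂ j]`.  Then any
measurable `f : S^n → [-R_j/2, R_j/2]` satisfies
`E[Z^j + (f(X) − (η_j − m_j))²] ≥ R_j²/12`. -/
theorem fingerprinting_lemma_single_coordinate
    {d k n : ℕ} (S : Set (Fin d → ℝ)) (h : (Fin d → ℝ) → ℝ)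
    (T : (Fin d → ℝ) → Fin k → ℝ)
    (η₁ η₂ : Fin k → ℝ) (hle : η₁ ≤ η₂)
    (hprob : ∀ η : Fin k → ℝ, (∀ l, η l ∈ Icc (η₁ l) (η₂ l)) →
      IsProbabilityMeasure (expFam S h T η))
    (hint : ∀ η : Fin k → ℝ, (∀ l, η l ∈ Icc (η₁ l) (η₂ l)) →
      ∀ l, Integrable (fun x => T x l) (expFam S h T η))
    (j : Fin k) (hj : η₁ j < η₂ j)
    (η₀ : Fin k → ℝ) (hη₀ : ∀ l, η₀ l ∈ Icc (η₁ l) (η₂ l))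
    (f : (Fin n → Fin d → ℝ) → ℝ) (hf : Measurable f)
    (hrange : ∀ X, |f X| ≤ (η₂ j - η₁ j) / 2) :
    (η₂ j - η₁ j) ^ 2 / 12 ≤
      ∫ t, (∫ X,
          (((η₂ j - η₁ j) ^ 2 / 4 - (t - (η₁ j + η₂ j) / 2) ^ 2) *
              (f X - (t - (η₁ j + η₂ j) / 2)) *
              (∑ i, (T (X i) j - suffMean S h T (Function.update η₀ j t) j))
            + (f X - (t - (η₁ j + η₂ j) / 2)) ^ 2)
        ∂(Measure.pi fun _ : Fin n => expFam S h T (Function.update η₀ j t)))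
      ∂(unif (η₁ j) (η₂ j)) := by
  have h_box (t : ℝ) (ht : t ∈ Icc (η₁ j) (η₂ j)) (l : Fin k) :
      Function.update η₀ j t l ∈ Icc (η₁ l) (η₂ l) := by
    by_cases hl : l = j
    · subst hl
      simpa using ht
    · simpa [hl] using hη₀ l
  have h_bound (P : Measure (Fin n → Fin d → ℝ)) : ∀ᵐ X ∂P, ‖f X‖ ≤ (η₂ j - η₁ j) / 2 :=
    ae_of_all _ hrange
  refine fingerprinting_lemma_single_coordinate_general hj (fun t ht => hprob _ (h_box t ht))
    (fun t ht => hint _ (h_box t ht) j) f (fun t ht => ?_) fun t ht => ?_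
  all_goals have := hprob _ (h_box t ht)
  · exact MemLp.of_bound hf.aestronglyMeasurable _ (h_bound _)
  · exact (integrable_pi_sum_eval (hint _ (h_box t ht) j)).mul_bdd hf.aestronglyMeasurable
      (h_bound _)
end
end

section
/- There exists a probability distribution D over mean vectors p ∈ [1/3, 2/3]^d and universal constants c₁, c₂, c₃ > 0 such that: for every α with 0 < α ≤ c₁√d, every ε ∈ [0,1], every δ ∈ [0,1] with δ ≤ c₂/n, and every (ε,δ)-DP mechanism M : {0,1}^{n×d} → [1/3,2/3]^d satisfying E_{p∼D, X∼P_p^{⊗n}, M}[‖M(X) − p‖₂²] ≤ α² (where P_p is the product Bernoulli distribution on {0,1}^d with mean vector p), one must have n ≥ c₃ · d/(α·ε). -/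
open MeasureTheory ProbabilityTheory Set

noncomputable section

/-- Two datasets are neighboring if they differ in exactly one entry. -/
def Neighbor {𝒳 : Type*} {n : ℕ} (x y : Fin n → 𝒳) : Prop :=
  ∃ i : Fin n, x i ≠ y i ∧ ∀ j : Fin n, j ≠ i → x j = y j

/-- `(ε, δ)`-differential privacy for a mechanism `M` mapping datasets to output
distributions (a Markov kernel given as a function to measures). -/
def IsDP {𝒳 Ω : Type*} [MeasurableSpace Ω] {n : ℕ}
    (M : (Fin n → 𝒳) → Measure Ω) (ε δ : ℝ) : Prop :=
  ∀ x y : Fin n → 𝒳, Neighbor x y → ∀ s : Set Ω, MeasurableSet s →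
    M x s ≤ ENNReal.ofReal (Real.exp ε) * M y s + ENNReal.ofReal δ

/-- The Bernoulli measure on `Bool` with success probability `p`. -/
def bernoulliBool (p : ℝ) : Measure Bool :=
  ENNReal.ofReal p • Measure.dirac true + ENNReal.ofReal (1 - p) • Measure.dirac false

/-- The product Bernoulli distribution on `{0,1}^d` with mean vector `p`. -/
def prodBernoulli {d : ℕ} (p : Fin d → ℝ) : Measure (Fin d → Bool) :=
  Measure.pi fun j => bernoulliBool (p j)

/-!
Draw `p` uniformly from `[1/3, 2/3]^d` and correlate the output `a` with a sample `y` through the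
fingerprint `∑ j, (a j - p j) * w (p j) (y j)`, where `w` is the Bernoulli score multiplied by
`(t - 1/3) * (2/3 - t)`. Integration by parts in `p j` turns the total fingerprint of the samples
into the expectation of `∑ j, a j * (2 * p j - 1)`, which is at least
`∑ j, (p j ^ 2 - 1/4 - (a j - p j) ^ 2)` because the difference is `∑ j, (a j - 1/2) ^ 2`.
As `p j ^ 2 - 1/4` has mean `1/108`, a mechanism of mean squared error `α²` has total fingerprint
at least `d/108 - α²`. On the other hand, a fresh sample has a fingerprint of mean zero and second
moment at most `‖a - p‖²`, and privacy lets each sample in the dataset be exchanged for a fresh one,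
so the total fingerprint is at most `n * ((exp ε - 1) * α + 2 * δ * d)`.
-/

section ProductMass

variable {ι 𝒳 : Type*} [Fintype ι]

/-- Mass function on `ι → 𝒳` of the product of the distributions with mass functions `q i`. -/
def productMass (q : ι → 𝒳 → ℝ) (x : ι → 𝒳) : ℝ := ∏ i, q i (x i)

lemma productMass_nonneg {q : ι → 𝒳 → ℝ} (hq : ∀ i b, 0 ≤ q i b) (x : ι → 𝒳) :
    0 ≤ productMass q x :=
  Finset.prod_nonneg fun i _ => hq i (x i)

lemma hasDerivAt_productMass {q : ℝ → ι → 𝒳 → ℝ} {s : ι → 𝒳 → ℝ} {t : ℝ}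
    (hq : ∀ i b, HasDerivAt (fun t => q t i b) (q t i b * s i b) t) (x : ι → 𝒳) :
    HasDerivAt (fun t => productMass (q t) x) (productMass (q t) x * ∑ i, s i (x i)) t := by
  classical
  refine (HasDerivAt.fun_finsetProd fun i _ => hq i (x i)).congr_deriv ?_
  rw [productMass, Finset.mul_sum]
  refine Finset.sum_congr rfl fun i hi => ?_
  rw [smul_eq_mul, ← mul_assoc, Finset.prod_erase_mul _ _ hi]

variable [DecidableEq ι]

lemma productMass_update_mul (q : ι → 𝒳 → ℝ) (x : ι → 𝒳) (i : ι) (y : 𝒳) :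
    productMass q (Function.update x i y) * q i (x i) = productMass q x * q i y := by
  have hrest : ∏ k ∈ Finset.univ.erase i, q k (Function.update x i y k) =
      ∏ k ∈ Finset.univ.erase i, q k (x k) :=
    Finset.prod_congr rfl fun k hk => by rw [Function.update_of_ne (Finset.ne_of_mem_erase hk)]
  simp only [productMass, ← Finset.mul_prod_erase Finset.univ _ (Finset.mem_univ i), hrest,
    Function.update_self]
  ring

variable [Fintype 𝒳]

lemma sum_productMass_mul_prod (q f : ι → 𝒳 → ℝ) :
    ∑ x, productMass q x * ∏ i, f i (x i) = ∏ i, ∑ b, q i b * f i b := by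
  simp only [Finset.prod_univ_sum, productMass, Finset.prod_mul_distrib, Fintype.piFinset_univ]

lemma sum_productMass_resample (q : ι → 𝒳 → ℝ) (i : ι) (T : (ι → 𝒳) → 𝒳 → ℝ) :
    ∑ x, ∑ y, productMass q x * q i y * T (Function.update x i y) (x i) =
      ∑ x, ∑ y, productMass q x * q i y * T x y := by
  -- Exchanging `x i` with the fresh sample `y` preserves their joint law.
  let swap : (ι → 𝒳) × 𝒳 → (ι → 𝒳) × 𝒳 := fun z => (Function.update z.1 i z.2, z.1 i)
  have hswap : Function.Involutive swap := fun z => by simp [swap]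
  rw [← Fintype.sum_prod_type', ← Fintype.sum_prod_type']
  refine Fintype.sum_equiv hswap.toPerm _ _ fun z => ?_
  simp only [Function.Involutive.coe_toPerm, swap, productMass_update_mul]

variable {q : ι → 𝒳 → ℝ}

lemma sum_productMass (hq : ∀ i, ∑ b, q i b = 1) : ∑ x, productMass q x = 1 := by
  simpa [hq] using sum_productMass_mul_prod q fun _ _ => 1

lemma sum_productMass_mul_apply (hq : ∀ i, ∑ b, q i b = 1) (i : ι) (f : 𝒳 → ℝ) :
    ∑ x, productMass q x * f (x i) = ∑ b, q i b * f b := by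
  have h := sum_productMass_mul_prod q fun k b => if k = i then f b else 1
  rw [Fintype.prod_eq_single i fun k hk => by simp [hk, hq]] at h
  simpa using h

lemma sum_productMass_mul_apply_mul_apply (hq : ∀ i, ∑ b, q i b = 1) {i j : ι} (hij : i ≠ j)
    (f g : 𝒳 → ℝ) :
    ∑ x, productMass q x * (f (x i) * g (x j)) =
      (∑ b, q i b * f b) * ∑ b, q j b * g b := by
  have h := sum_productMass_mul_prod q fun k b =>
    (if k = i then f b else 1) * (if k = j then g b else 1)
  rw [Fintype.prod_eq_mul i j hij fun k hk => by simp [hk.1, hk.2, hq]] at h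
  simp only [Finset.prod_mul_distrib, Finset.prod_ite_eq', Finset.mem_univ, if_true] at h
  simpa only [if_true, if_neg hij, if_neg hij.symm, mul_one, one_mul] using h

lemma sum_productMass_mul_sum_sq (hq : ∀ i, ∑ b, q i b = 1) {f : ι → 𝒳 → ℝ}
    (hf : ∀ i, ∑ b, q i b * f i b = 0) :
    ∑ x, productMass q x * (∑ i, f i (x i)) ^ 2 = ∑ i, ∑ b, q i b * f i b ^ 2 := by
  have hcov (i j : ι) : ∑ x, productMass q x * (f i (x i) * f j (x j)) =
      if i = j then ∑ b, q i b * f i b ^ 2 else 0 := by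
    split_ifs with hij
    · subst hij
      simpa only [← sq] using sum_productMass_mul_apply hq i fun b => f i b ^ 2
    · rw [sum_productMass_mul_apply_mul_apply hq hij, hf i, zero_mul]
  calc ∑ x, productMass q x * (∑ i, f i (x i)) ^ 2
      = ∑ x, ∑ i, ∑ j, productMass q x * (f i (x i) * f j (x j)) := by
        simp_rw [sq, Fintype.sum_mul_sum, Finset.mul_sum]
    _ = ∑ i, ∑ j, ∑ x, productMass q x * (f i (x i) * f j (x j)) := by
        rw [Finset.sum_comm]
        exact Finset.sum_congr rfl fun i _ => Finset.sum_comm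
    _ = ∑ i, ∑ b, q i b * f i b ^ 2 := by simp [hcov]

end ProductMass

section Privacy

variable {Ω : Type*} [MeasurableSpace Ω]

/-- One-sided `(ε, δ)`-indistinguishability of two distributions: the relation that
`IsDP` imposes on the outputs of neighboring datasets. -/
def ApproxDominated (μ ν : Measure Ω) (ε δ : ℝ) : Prop :=
  ∀ s, MeasurableSet s → μ s ≤ ENNReal.ofReal (Real.exp ε) * ν s + ENNReal.ofReal δ

lemma ApproxDominated.refl (μ : Measure Ω) {ε : ℝ} (hε : 0 ≤ ε) (δ : ℝ) :
    ApproxDominated μ μ ε δ := fun s _ =>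
  calc μ s ≤ ENNReal.ofReal (Real.exp ε) * μ s :=
        le_mul_of_one_le_left zero_le (ENNReal.one_le_ofReal.2 (Real.one_le_exp hε))
    _ ≤ ENNReal.ofReal (Real.exp ε) * μ s + ENNReal.ofReal δ := le_self_add

variable {μ ν : Measure Ω} {ε δ B : ℝ} {f : Ω → ℝ}

lemma ApproxDominated.measureReal_le [IsFiniteMeasure μ] [IsFiniteMeasure ν]
    (h : ApproxDominated μ ν ε δ) (hδ : 0 ≤ δ) {s : Set Ω} (hs : MeasurableSet s) :
    μ.real s ≤ Real.exp ε * ν.real s + δ := by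
  have hreal := ENNReal.toReal_mono (by finiteness) (h s hs)
  rwa [ENNReal.toReal_add (by finiteness) (by finiteness), ENNReal.toReal_mul,
    ENNReal.toReal_ofReal (Real.exp_pos _).le, ENNReal.toReal_ofReal hδ] at hreal

lemma integrableOn_Ioc_measureReal_le [IsFiniteMeasure μ] (a b : ℝ) :
    IntegrableOn (fun t => μ.real {ω | t ≤ f ω}) (Ioc a b) := by
  have hanti : Antitone fun t => μ.real {ω | t ≤ f ω} := fun _ _ hst =>
    measureReal_mono fun _ hω => le_trans hst hω
  exact ((hanti.antitoneOn _).integrableOn_isCompact isCompact_Icc).mono_set Ioc_subset_Icc_self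

lemma integral_posPart_sub_integral_negPart (hf : Integrable f μ) :
    ∫ ω, (f ω)⁺ ∂μ - ∫ ω, (f ω)⁻ ∂μ = ∫ ω, f ω ∂μ := by
  have hpos : Integrable (fun ω => (f ω)⁺) μ := hf.pos_part
  have hneg : Integrable (fun ω => (f ω)⁻) μ := hf.neg_part
  simp only [← integral_sub hpos hneg, posPart_sub_negPart]

lemma integral_posPart_add_integral_negPart (hf : Integrable f μ) :
    ∫ ω, (f ω)⁺ ∂μ + ∫ ω, (f ω)⁻ ∂μ = ∫ ω, |f ω| ∂μ := by
  have hpos : Integrable (fun ω => (f ω)⁺) μ := hf.pos_part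
  have hneg : Integrable (fun ω => (f ω)⁻) μ := hf.neg_part
  simp only [← integral_add hpos hneg, posPart_add_negPart]

lemma ApproxDominated.integral_le_of_nonneg [IsFiniteMeasure μ] [IsFiniteMeasure ν]
    (h : ApproxDominated μ ν ε δ) (hδ : 0 ≤ δ) (hB : 0 ≤ B) (hf : Measurable f)
    (hf0 : ∀ ω, 0 ≤ f ω) (hfμ : ∀ᵐ ω ∂μ, f ω ≤ B) (hfν : ∀ᵐ ω ∂ν, f ω ≤ B) :
    ∫ ω, f ω ∂μ ≤ Real.exp ε * ∫ ω, f ω ∂ν + δ * B := by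
  have layercake (m : Measure Ω) [IsFiniteMeasure m] (hm : ∀ᵐ ω ∂m, f ω ≤ B) :
      ∫ ω, f ω ∂m = ∫ t in Ioc 0 B, m.real {ω | t ≤ f ω} :=
    (Integrable.of_bound hf.aestronglyMeasurable B <| hm.mono fun ω hω => by
      rwa [Real.norm_of_nonneg (hf0 ω)]).integral_eq_integral_Ioc_meas_le (ae_of_all _ hf0) hm
  have hμ : IntegrableOn (fun t => μ.real {ω | t ≤ f ω}) (Ioc 0 B) :=
    integrableOn_Ioc_measureReal_le 0 B
  have hν : IntegrableOn (fun t => Real.exp ε * ν.real {ω | t ≤ f ω}) (Ioc 0 B) :=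
    (integrableOn_Ioc_measureReal_le 0 B).const_mul _
  have hδ_int : IntegrableOn (fun _ : ℝ => δ) (Ioc 0 B) := by simp
  calc ∫ ω, f ω ∂μ = ∫ t in Ioc 0 B, μ.real {ω | t ≤ f ω} := layercake μ hfμ
    _ ≤ ∫ t in Ioc 0 B, (Real.exp ε * ν.real {ω | t ≤ f ω} + δ) :=
        integral_mono hμ (hν.add hδ_int) fun t =>
          h.measureReal_le hδ (measurableSet_le measurable_const hf)
    _ = Real.exp ε * ∫ ω, f ω ∂ν + δ * B := by
        rw [integral_add hν hδ_int, integral_const_mul, ← layercake ν hfν]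
        simp [hB, mul_comm]

lemma ApproxDominated.integral_le_of_abs_le [IsFiniteMeasure μ] [IsFiniteMeasure ν]
    (hμν : ApproxDominated μ ν ε δ) (hνμ : ApproxDominated ν μ ε δ) (hε : 0 ≤ ε)
    (hδ : 0 ≤ δ) (hB : 0 ≤ B) (hf : Measurable f) (hfμ : ∀ᵐ ω ∂μ, |f ω| ≤ B)
    (hfν : ∀ᵐ ω ∂ν, |f ω| ≤ B) :
    ∫ ω, f ω ∂μ ≤ ∫ ω, f ω ∂ν + (Real.exp ε - 1) * ∫ ω, |f ω| ∂ν + 2 * δ * B := by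
  have hpos_le (ω : Ω) : (f ω)⁺ ≤ |f ω| := by
    linarith [posPart_add_negPart (f ω), negPart_nonneg (f ω)]
  have hneg_le (ω : Ω) : (f ω)⁻ ≤ |f ω| := by
    linarith [posPart_add_negPart (f ω), posPart_nonneg (f ω)]
  have hpos := hμν.integral_le_of_nonneg (f := fun ω => (f ω)⁺) hδ hB (hf.sup_const 0)
    (fun ω => posPart_nonneg _) (hfμ.mono fun ω => (hpos_le ω).trans)
    (hfν.mono fun ω => (hpos_le ω).trans)
  have hneg := hνμ.integral_le_of_nonneg hδ hB (f := fun ω => (f ω)⁻) (hf.neg.sup_const 0)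
    (fun ω => negPart_nonneg _) (hfν.mono fun ω => (hneg_le ω).trans)
    (hfμ.mono fun ω => (hneg_le ω).trans)
  have hμ := integral_posPart_sub_integral_negPart (.of_bound hf.aestronglyMeasurable B hfμ)
  have hν := integral_posPart_sub_integral_negPart (.of_bound hf.aestronglyMeasurable B hfν)
  have hν_abs := integral_posPart_add_integral_negPart (.of_bound hf.aestronglyMeasurable B hfν)
  set u := ∫ ω, (f ω)⁺ ∂ν
  set v := ∫ ω, (f ω)⁻ ∂ν
  set w := ∫ ω, (f ω)⁻ ∂μ
  have hexp : 0 ≤ Real.exp ε - 1 := sub_nonneg.2 (Real.one_le_exp hε)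
  have hv : 0 ≤ v := integral_nonneg fun ω => negPart_nonneg _
  have hvw : v - w ≤ (Real.exp ε - 1) * v + δ * B := by
    rcases le_total v w with hle | hle
    · linarith [mul_nonneg hexp hv, mul_nonneg hδ hB]
    · linarith [mul_le_mul_of_nonneg_left hle hexp]
  rw [← hμ, ← hν, ← hν_abs]
  linarith

variable {𝒳 : Type*} {n : ℕ} {M : (Fin n → 𝒳) → Measure Ω}

lemma IsDP.approxDominated_update (hM : IsDP M ε δ) (hε : 0 ≤ ε) (X : Fin n → 𝒳) (i : Fin n)
    (y : 𝒳) : ApproxDominated (M X) (M (Function.update X i y)) ε δ := by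
  by_cases hy : y = X i
  · rw [hy, Function.update_eq_self]
    exact .refl (M X) hε δ
  · exact hM _ _ ⟨i, by simpa using Ne.symm hy, fun j hj => by simp [hj]⟩

lemma IsDP.integral_le_integral_update [∀ X, IsFiniteMeasure (M X)] (hM : IsDP M ε δ)
    (hε : 0 ≤ ε) (hδ : 0 ≤ δ) (hB : 0 ≤ B) (hf : Measurable f)
    (hfB : ∀ X, ∀ᵐ a ∂M X, |f a| ≤ B) (X : Fin n → 𝒳) (i : Fin n) (y : 𝒳) :
    ∫ a, f a ∂M X ≤ ∫ a, f a ∂M (Function.update X i y) +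
      (Real.exp ε - 1) * ∫ a, |f a| ∂M (Function.update X i y) + 2 * δ * B := by
  refine (hM.approxDominated_update hε X i y).integral_le_of_abs_le ?_ hε hδ hB hf (hfB _) (hfB _)
  simpa using hM.approxDominated_update hε (Function.update X i y) i (X i)

variable [Fintype 𝒳] {q : Fin n → 𝒳 → ℝ} {Z : 𝒳 → Ω → ℝ} {α : ℝ}

lemma IsDP.sum_productMass_mul_integral_le [∀ X, IsFiniteMeasure (M X)] (hM : IsDP M ε δ)
    (hε : 0 ≤ ε) (hδ : 0 ≤ δ) (hB : 0 ≤ B) (hq : ∀ i y, 0 ≤ q i y) (hq1 : ∀ i, ∑ y, q i y = 1)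
    (hZ : ∀ y, Measurable (Z y)) (hZB : ∀ X y, ∀ᵐ a ∂M X, |Z y a| ≤ B) (i : Fin n) :
    ∑ X, productMass q X * ∫ a, Z (X i) a ∂M X ≤
      ∑ X, productMass q X * ∑ y, q i y *
        (∫ a, Z y a ∂M X + (Real.exp ε - 1) * ∫ a, |Z y a| ∂M X + 2 * δ * B) := by
  let T (X : Fin n → 𝒳) (y : 𝒳) : ℝ :=
    ∫ a, Z y a ∂M X + (Real.exp ε - 1) * ∫ a, |Z y a| ∂M X + 2 * δ * B
  calc ∑ X, productMass q X * ∫ a, Z (X i) a ∂M X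
      = ∑ X, ∑ y, productMass q X * q i y * ∫ a, Z (X i) a ∂M X := by
        simp only [← Finset.sum_mul, ← Finset.mul_sum, hq1, mul_one]
    _ ≤ ∑ X, ∑ y, productMass q X * q i y * T (Function.update X i y) (X i) := by
        gcongr with X _ y _
        · exact mul_nonneg (productMass_nonneg hq X) (hq i y)
        · exact hM.integral_le_integral_update hε hδ hB (hZ _) (fun X => hZB X _) X i y
    _ = ∑ X, ∑ y, productMass q X * q i y * T X y := sum_productMass_resample q i T
    _ = ∑ X, productMass q X * ∑ y, q i y * T X y := by simp only [Finset.mul_sum, mul_assoc]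

lemma integral_abs_le_integral_sq_div_add [IsProbabilityMeasure μ] (hf : MemLp f 2 μ)
    (hα : 0 < α) : ∫ ω, |f ω| ∂μ ≤ (∫ ω, f ω ^ 2 ∂μ) / (2 * α) + α / 2 := by
  have hsq : Integrable (fun ω => f ω ^ 2 / (2 * α)) μ := hf.integrable_sq.div_const _
  have hpointwise (x : ℝ) : |x| ≤ x ^ 2 / (2 * α) + α / 2 := by
    have hsquare : x ^ 2 / (2 * α) + α / 2 - |x| = (|x| - α) ^ 2 / (2 * α) := by
      rw [← sq_abs x]
      field
    have hnonneg : 0 ≤ (|x| - α) ^ 2 / (2 * α) := by positivity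
    linarith
  calc ∫ ω, |f ω| ∂μ ≤ ∫ ω, (f ω ^ 2 / (2 * α) + α / 2) ∂μ :=
        integral_mono (hf.integrable one_le_two).abs (hsq.add (integrable_const _))
          fun ω => hpointwise (f ω)
    _ = (∫ ω, f ω ^ 2 ∂μ) / (2 * α) + α / 2 := by
        rw [integral_add hsq (integrable_const _), integral_div]
        simp

lemma sum_mul_integral_abs_le [IsProbabilityMeasure μ] {r : 𝒳 → ℝ} (hr : ∀ y, 0 ≤ r y)
    (hr1 : ∑ y, r y = 1) (hZ : ∀ y, MemLp (Z y) 2 μ) (hα : 0 < α) :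
    ∑ y, r y * ∫ ω, |Z y ω| ∂μ ≤ (∫ ω, ∑ y, r y * Z y ω ^ 2 ∂μ) / (2 * α) + α / 2 :=
  calc ∑ y, r y * ∫ ω, |Z y ω| ∂μ
      ≤ ∑ y, r y * ((∫ ω, Z y ω ^ 2 ∂μ) / (2 * α) + α / 2) := by
        gcongr with y _
        · exact hr y
        · exact integral_abs_le_integral_sq_div_add (hZ y) hα
    _ = (∫ ω, ∑ y, r y * Z y ω ^ 2 ∂μ) / (2 * α) + α / 2 := by
        rw [integral_finsetSum _ fun y _ => (hZ y).integrable_sq.const_mul _]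
        simp only [integral_const_mul, mul_add, Finset.sum_add_distrib, ← Finset.sum_mul, hr1,
          one_mul, Finset.sum_div, mul_div_assoc]

lemma IsDP.sum_productMass_mul_integral_le_of_centered [∀ X, IsProbabilityMeasure (M X)]
    (hM : IsDP M ε δ) (hε : 0 ≤ ε) (hδ : 0 ≤ δ) (hB : 0 ≤ B) (hα : 0 < α)
    (hq : ∀ i y, 0 ≤ q i y) (hq1 : ∀ i, ∑ y, q i y = 1) (hZ : ∀ y, Measurable (Z y))
    (hZB : ∀ X y, ∀ᵐ a ∂M X, |Z y a| ≤ B) (i : Fin n) (hZ0 : ∀ a, ∑ y, q i y * Z y a = 0) :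
    ∑ X, productMass q X * ∫ a, Z (X i) a ∂M X ≤
      (Real.exp ε - 1) *
        ((∑ X, productMass q X * ∫ a, ∑ y, q i y * Z y a ^ 2 ∂M X) / (2 * α) + α / 2) +
      2 * δ * B := by
  have hexp : 0 ≤ Real.exp ε - 1 := sub_nonneg.2 (Real.one_le_exp hε)
  have hmem (X : Fin n → 𝒳) (y : 𝒳) : MemLp (Z y) 2 (M X) :=
    .of_bound (hZ y).aestronglyMeasurable B (hZB X y)
  have hcentered (X : Fin n → 𝒳) : ∑ y, q i y * ∫ a, Z y a ∂M X = 0 := by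
    simp only [← integral_const_mul]
    rw [← integral_finsetSum _ fun y _ => ((hmem X y).integrable one_le_two).const_mul _]
    simp only [hZ0, integral_zero]
  calc ∑ X, productMass q X * ∫ a, Z (X i) a ∂M X
      ≤ ∑ X, productMass q X * ∑ y, q i y *
          (∫ a, Z y a ∂M X + (Real.exp ε - 1) * ∫ a, |Z y a| ∂M X + 2 * δ * B) :=
        hM.sum_productMass_mul_integral_le hε hδ hB hq hq1 hZ hZB i
    _ = ∑ X, productMass q X *
          ((Real.exp ε - 1) * ∑ y, q i y * ∫ a, |Z y a| ∂M X + 2 * δ * B) := by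
        simp only [mul_add, Finset.sum_add_distrib, hcentered, mul_left_comm _ (Real.exp ε - 1),
          ← Finset.mul_sum, ← Finset.sum_mul, hq1]
        ring
    _ ≤ ∑ X, productMass q X * ((Real.exp ε - 1) *
          ((∫ a, ∑ y, q i y * Z y a ^ 2 ∂M X) / (2 * α) + α / 2) + 2 * δ * B) := by
        gcongr with X _
        · exact productMass_nonneg hq X
        · exact sum_mul_integral_abs_le (hq i) (hq1 i) (hmem X) hα
    _ = (Real.exp ε - 1) *
          ((∑ X, productMass q X * ∫ a, ∑ y, q i y * Z y a ^ 2 ∂M X) / (2 * α) + α / 2) +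
        2 * δ * B := by
        simp only [mul_add, Finset.sum_add_distrib, mul_left_comm _ (Real.exp ε - 1),
          ← Finset.mul_sum, ← Finset.sum_mul, sum_productMass hq1, ← mul_div_assoc,
          ← Finset.sum_div, one_mul]

end Privacy

section Bernoulli

/-- Mass function of the Bernoulli distribution, as a polynomial in the success probability `t`. -/
def bernoulliMass (t : ℝ) (b : Bool) : ℝ := if b then t else 1 - t

/-- Score of the Bernoulli family: the derivative in `t` of the logarithm of `bernoulliMass`. -/
def bernoulliScore (t : ℝ) (b : Bool) : ℝ := if b then t⁻¹ else -(1 - t)⁻¹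

variable {t : ℝ}

lemma continuous_bernoulliMass (b : Bool) : Continuous (bernoulliMass · b) := by
  cases b <;> simp only [bernoulliMass, Bool.false_eq_true, if_true, if_false] <;> fun_prop

lemma bernoulliMass_nonneg (ht : t ∈ Icc (0 : ℝ) 1) (b : Bool) : 0 ≤ bernoulliMass t b := by
  cases b
  · exact sub_nonneg.2 ht.2
  · exact ht.1

lemma sum_bernoulliMass (t : ℝ) : ∑ b, bernoulliMass t b = 1 := by simp [bernoulliMass]

lemma measureReal_bernoulliBool_singleton (ht : t ∈ Icc (0 : ℝ) 1) (b : Bool) :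
    (bernoulliBool t).real {b} = bernoulliMass t b := by
  cases b <;> simp [bernoulliBool, bernoulliMass, measureReal_def, ht.1, ht.2]

lemma hasDerivAt_bernoulliMass (ht : t ∈ Ioo (0 : ℝ) 1) (b : Bool) :
    HasDerivAt (bernoulliMass · b) (bernoulliMass t b * bernoulliScore t b) t := by
  cases b
  · simpa [bernoulliMass, bernoulliScore, (sub_pos.2 ht.2).ne'] using (hasDerivAt_id t).const_sub 1
  · simpa [bernoulliMass, bernoulliScore, ht.1.ne'] using hasDerivAt_id' t

lemma sum_bernoulliMass_mul_bernoulliScore (ht : t ∈ Ioo (0 : ℝ) 1) :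
    ∑ b, bernoulliMass t b * bernoulliScore t b = 0 := by
  simp [bernoulliMass, bernoulliScore, ht.1.ne', (sub_pos.2 ht.2).ne']

lemma continuousOn_bernoulliScore (b : Bool) : ContinuousOn (bernoulliScore · b) (Ioo 0 1) := by
  cases b <;> simp only [bernoulliScore, Bool.false_eq_true, if_true, if_false]
  · exact ((continuousOn_const.sub continuousOn_id).inv₀ fun t ht => (sub_pos.2 ht.2).ne').neg
  · exact continuousOn_id.inv₀ fun t ht => ht.1.ne'

lemma integral_mul_productMass_mul_bernoulliScore {ι : Type*} [Fintype ι] {a b : ℝ} (ha : 0 < a)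
    (hab : a ≤ b) (hb : b < 1) (x : ι → Bool) :
    ∫ t in a..b, (t - a) * (b - t) *
        (productMass (fun _ => bernoulliMass t) x * ∑ i, bernoulliScore t (x i)) =
      ∫ t in a..b, (2 * t - a - b) * productMass (fun _ => bernoulliMass t) x := by
  have hsub : uIcc a b ⊆ Ioo 0 1 := by
    rw [uIcc_of_le hab]
    exact Icc_subset_Ioo ha hb
  have htaper (t : ℝ) : HasDerivAt (fun t => (t - a) * (b - t)) (a + b - 2 * t) t := by
    refine (((hasDerivAt_id' t).sub_const a).mul ((hasDerivAt_id' t).const_sub b)).congr_deriv ?_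
    ring
  have hmass (t : ℝ) (ht : t ∈ uIcc a b) :=
    hasDerivAt_productMass (fun (_ : ι) c => hasDerivAt_bernoulliMass (hsub ht) c) x
  have hscore : ContinuousOn (fun t => ∑ i, bernoulliScore t (x i)) (uIcc a b) :=
    continuousOn_finsetSum _ fun i _ => (continuousOn_bernoulliScore (x i)).mono hsub
  have hmass_cont : ContinuousOn (fun t => productMass (fun _ => bernoulliMass t) x) (uIcc a b) :=
    fun t ht => (hmass t ht).continuousAt.continuousWithinAt
  rw [intervalIntegral.integral_mul_deriv_eq_deriv_mul (fun t _ => htaper t) hmass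
    (Continuous.intervalIntegrable (by fun_prop) _ _) (hmass_cont.mul hscore).intervalIntegrable]
  simp only [sub_self, zero_mul, mul_zero, zero_sub, ← intervalIntegral.integral_neg]
  congr with t
  ring

end Bernoulli

section Prior

variable {ι : Type*} [Fintype ι]

/-- The uniform distribution on `[1/3, 2/3]^ι`, the prior on mean vectors. -/
def uniformPrior (ι : Type*) [Fintype ι] : Measure (ι → ℝ) :=
  Measure.pi fun _ => volume[|Icc (1 / 3 : ℝ) (2 / 3)]

instance isProbabilityMeasure_cond_Icc :
    IsProbabilityMeasure (volume[|Icc (1 / 3 : ℝ) (2 / 3)]) :=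
  cond_isProbabilityMeasure_of_finite (by norm_num) (by simp)

instance isProbabilityMeasure_uniformPrior : IsProbabilityMeasure (uniformPrior ι) := by
  unfold uniformPrior
  infer_instance

lemma ae_uniformPrior_mem :
    ∀ᵐ p ∂uniformPrior ι, p ∈ univ.pi fun _ => Icc (1 / 3 : ℝ) (2 / 3) := by
  simp only [mem_univ_pi]
  exact ae_all_iff.2 fun j => (measurePreserving_eval _ j).quasiMeasurePreserving.ae
    (ae_cond_mem measurableSet_Icc)

lemma integral_cond_Icc {a b : ℝ} (hab : a ≤ b) (f : ℝ → ℝ) :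
    ∫ t, f t ∂volume[|Icc a b] = (b - a)⁻¹ * ∫ t in a..b, f t := by
  rw [ProbabilityTheory.cond, integral_smul_measure, integral_Icc_eq_integral_Ioc,
    intervalIntegral.integral_of_le hab]
  simp [hab]

lemma integrable_of_ae_mem_isCompact {E : Type*} [TopologicalSpace E] [MeasurableSpace E]
    [OpensMeasurableSpace E] [T2Space E] {μ : Measure E} [IsFiniteMeasure μ] {K : Set E}
    (hK : IsCompact K) (hμ : ∀ᵐ x ∂μ, x ∈ K) {f : E → ℝ} (hf : ContinuousOn f K) :
    Integrable f μ := by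
  simpa only [IntegrableOn, Measure.restrict_eq_self_of_ae_mem hμ] using
    hf.integrableOn_compact (μ := μ) hK

lemma integrable_uniformPrior {f : (ι → ℝ) → ℝ}
    (hf : ContinuousOn f (univ.pi fun _ => Icc (1 / 3) (2 / 3))) :
    Integrable f (uniformPrior ι) :=
  integrable_of_ae_mem_isCompact (isCompact_univ_pi fun _ => isCompact_Icc) ae_uniformPrior_mem hf

lemma integral_uniformPrior_apply (j : ι) {f : ℝ → ℝ} (hf : Continuous f) :
    ∫ p, f (p j) ∂uniformPrior ι = 3 * ∫ t in (1 / 3)..(2 / 3), f t := by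
  have heval : (uniformPrior ι).map (Function.eval j) = volume[|Icc (1 / 3 : ℝ) (2 / 3)] :=
    (measurePreserving_eval _ j).map_eq
  rw [← integral_map (φ := Function.eval j) (measurable_pi_apply j).aemeasurable
    hf.aestronglyMeasurable, heval, integral_cond_Icc (by norm_num)]
  norm_num

lemma integral_uniformPrior_sq_sub (j : ι) :
    ∫ p, (p j ^ 2 - 1 / 4) ∂uniformPrior ι = 1 / 108 := by
  rw [integral_uniformPrior_apply j (f := fun t => t ^ 2 - 1 / 4) (by fun_prop),
    intervalIntegral.integral_sub (by simp) (by simp), integral_pow]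
  norm_num

end Prior

section TaperedScore

/-- The Bernoulli score damped by a factor vanishing at the ends of `[1/3, 2/3]`, so that
integrating by parts over this interval produces no boundary terms. -/
def taperedScore (t : ℝ) (b : Bool) : ℝ := (t - 1 / 3) * (2 / 3 - t) * bernoulliScore t b

variable {t : ℝ}

lemma Icc_third_subset_Ioo : Icc (1 / 3 : ℝ) (2 / 3) ⊆ Ioo 0 1 :=
  Icc_subset_Ioo (by norm_num) (by norm_num)

lemma sum_bernoulliMass_mul_taperedScore (ht : t ∈ Ioo (0 : ℝ) 1) :
    ∑ b, bernoulliMass t b * taperedScore t b = 0 := by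
  simp only [taperedScore, mul_left_comm (bernoulliMass t _), ← Finset.mul_sum,
    sum_bernoulliMass_mul_bernoulliScore ht, mul_zero]

lemma abs_bernoulliScore_le (ht : t ∈ Icc (1 / 3 : ℝ) (2 / 3)) (b : Bool) :
    |bernoulliScore t b| ≤ 3 := by
  have hinv {x : ℝ} (hx : 1 / 3 ≤ x) : |x⁻¹| ≤ 3 := by
    rw [abs_of_nonneg (by positivity)]
    exact (inv_anti₀ (by norm_num) hx).trans (by norm_num)
  cases b
  · simpa [bernoulliScore] using hinv (x := 1 - t) (by linarith [ht.2])
  · simpa [bernoulliScore] using hinv ht.1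

lemma abs_taperedScore_le (ht : t ∈ Icc (1 / 3 : ℝ) (2 / 3)) (b : Bool) :
    |taperedScore t b| ≤ 1 := by
  have htaper0 : 0 ≤ (t - 1 / 3) * (2 / 3 - t) := mul_nonneg (sub_nonneg.2 ht.1) (sub_nonneg.2 ht.2)
  have htaper : (t - 1 / 3) * (2 / 3 - t) ≤ 1 / 3 := by nlinarith [sq_nonneg (t - 1 / 2)]
  calc |taperedScore t b| = (t - 1 / 3) * (2 / 3 - t) * |bernoulliScore t b| := by
        rw [taperedScore, abs_mul, abs_of_nonneg htaper0]
    _ ≤ 1 / 3 * 3 := by gcongr; exact abs_bernoulliScore_le ht b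
    _ = 1 := by norm_num

lemma continuousOn_taperedScore (b : Bool) :
    ContinuousOn (taperedScore · b) (Icc (1 / 3) (2 / 3)) :=
  ContinuousOn.mul (by fun_prop) ((continuousOn_bernoulliScore b).mono Icc_third_subset_Ioo)

end TaperedScore

section Sample

variable {ι κ : Type*} [Fintype ι] [Fintype κ] {p : ι → ℝ}

/-- Mass function of the product Bernoulli distribution with mean vector `p`. -/
abbrev prodBernoulliMass (p : ι → ℝ) : (ι → Bool) → ℝ := productMass fun j => bernoulliMass (p j)

/-- Mass function of a family, indexed by `κ`, of independent samples from the product Bernoulli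
distribution with mean vector `p`. -/
abbrev sampleMass (p : ι → ℝ) : (κ → ι → Bool) → ℝ := productMass fun _ => prodBernoulliMass p

lemma prodBernoulliMass_nonneg (hp : ∀ j, p j ∈ Icc (0 : ℝ) 1) (y : ι → Bool) :
    0 ≤ prodBernoulliMass p y :=
  productMass_nonneg (fun j => bernoulliMass_nonneg (hp j)) y

lemma sum_prodBernoulliMass [DecidableEq ι] (p : ι → ℝ) : ∑ y, prodBernoulliMass p y = 1 :=
  sum_productMass fun j => sum_bernoulliMass (p j)

lemma sampleMass_nonneg (hp : ∀ j, p j ∈ Icc (0 : ℝ) 1) (X : κ → ι → Bool) :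
    0 ≤ sampleMass p X :=
  productMass_nonneg (fun _ => prodBernoulliMass_nonneg hp) X

lemma sum_sampleMass [DecidableEq ι] [DecidableEq κ] (p : ι → ℝ) :
    ∑ X : κ → ι → Bool, sampleMass p X = 1 :=
  sum_productMass fun _ => sum_prodBernoulliMass p

lemma continuous_sampleMass (X : κ → ι → Bool) : Continuous (sampleMass · X) :=
  continuous_finsetProd _ fun _ _ => continuous_finsetProd _ fun j _ =>
    (continuous_bernoulliMass _).comp (continuous_apply j)

lemma sampleMass_eq_prod_productMass (p : ι → ℝ) (X : κ → ι → Bool) :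
    sampleMass p X = ∏ j, productMass (fun _ => bernoulliMass (p j)) fun i => X i j :=
  Finset.prod_comm

lemma measureReal_pi_singleton_eq_productMass {E : Type*} [MeasurableSpace E]
    [MeasurableSingletonClass E] (μ : ι → Measure E) [∀ j, SigmaFinite (μ j)] (x : ι → E) :
    (Measure.pi μ).real {x} = productMass (fun j b => (μ j).real {b}) x := by
  simp only [measureReal_def, Measure.pi_singleton, ENNReal.toReal_prod, productMass]

instance isFiniteMeasure_bernoulliBool (t : ℝ) : IsFiniteMeasure (bernoulliBool t) := by
  have := Measure.smul_finite (Measure.dirac true) (ENNReal.ofReal_ne_top (r := t))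
  have := Measure.smul_finite (Measure.dirac false) (ENNReal.ofReal_ne_top (r := 1 - t))
  exact inferInstanceAs (IsFiniteMeasure (_ + _))

instance isFiniteMeasure_prodBernoulli {d : ℕ} (p : Fin d → ℝ) :
    IsFiniteMeasure (prodBernoulli p) := by
  unfold prodBernoulli
  infer_instance

lemma integral_pi_prodBernoulli [DecidableEq κ] {d : ℕ} {p : Fin d → ℝ}
    (hp : ∀ j, p j ∈ Icc (0 : ℝ) 1) (G : (κ → Fin d → Bool) → ℝ) :
    ∫ X, G X ∂Measure.pi (fun _ : κ => prodBernoulli p) = ∑ X, sampleMass p X * G X := by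
  have hmass (y : Fin d → Bool) : (prodBernoulli p).real {y} = prodBernoulliMass p y := by
    simp only [prodBernoulli, measureReal_pi_singleton_eq_productMass,
      measureReal_bernoulliBool_singleton (hp _)]
  rw [integral_fintype .of_finite]
  simp only [measureReal_pi_singleton_eq_productMass, hmass, smul_eq_mul]

lemma integral_pi_prod_mul_apply_congr {E : Type*} [MeasurableSpace E] {μ : ι → Measure E}
    [∀ j, SigmaFinite (μ j)] (g : ι → E → ℝ) (j : ι) {φ ψ : E → ℝ}
    (h : ∫ t, g j t * φ t ∂μ j = ∫ t, g j t * ψ t ∂μ j) :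
    ∫ p, (∏ k, g k (p k)) * φ (p j) ∂Measure.pi μ =
      ∫ p, (∏ k, g k (p k)) * ψ (p j) ∂Measure.pi μ := by
  classical
  have hfactor (χ : E → ℝ) : ∫ p, (∏ k, g k (p k)) * χ (p j) ∂Measure.pi μ =
      ∏ k, ∫ t, g k t * (if k = j then χ t else 1) ∂μ k := by
    rw [← integral_fintype_prod_eq_prod]
    simp only [Finset.prod_mul_distrib, Finset.prod_ite_eq', Finset.mem_univ, if_true]
  rw [hfactor, hfactor]
  refine Finset.prod_congr rfl fun k _ => ?_
  split_ifs with hk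
  · rw [hk, h]
  · rfl

lemma integrable_sampleMass_mul_sum_taperedScore (X : κ → ι → Bool) (j : ι) :
    Integrable (fun p => sampleMass p X * ∑ i, taperedScore (p j) (X i j)) (uniformPrior ι) := by
  refine integrable_uniformPrior ((continuous_sampleMass X).continuousOn.mul ?_)
  exact continuousOn_finsetSum _ fun i _ => (continuousOn_taperedScore (X i j)).comp
    (continuous_apply j).continuousOn fun p hp => hp j (mem_univ j)

lemma integral_uniformPrior_sampleMass_mul_sum_taperedScore (X : κ → ι → Bool) (j : ι) :
    ∫ p, sampleMass p X * ∑ i, taperedScore (p j) (X i j) ∂uniformPrior ι =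
      ∫ p, sampleMass p X * (2 * p j - 1) ∂uniformPrior ι := by
  simp only [sampleMass_eq_prod_productMass]
  refine integral_pi_prod_mul_apply_congr
    (fun k t => productMass (fun _ => bernoulliMass t) fun i => X i k) j
    (φ := fun t => ∑ i, taperedScore t (X i j)) (ψ := fun t => 2 * t - 1) ?_
  have hparts := integral_mul_productMass_mul_bernoulliScore (a := 1 / 3) (b := 2 / 3)
    (by norm_num) (by norm_num) (by norm_num) fun i => X i j
  rw [integral_cond_Icc (by norm_num), integral_cond_Icc (by norm_num)]
  convert congrArg (_ * ·) hparts using 4 with t t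
  · simp only [taperedScore, ← Finset.mul_sum]
    ring
  · ring

end Sample

section Fingerprint

variable {ι : Type*} [Fintype ι] {p a : ι → ℝ}

/-- Correlation statistic of an output `a` with a sample `y`, used to detect whether `y` belongs
to the dataset from which `a` was computed. -/
def fingerprint (p : ι → ℝ) (y : ι → Bool) (a : ι → ℝ) : ℝ :=
  ∑ j, (a j - p j) * taperedScore (p j) (y j)

lemma continuous_fingerprint (p : ι → ℝ) (y : ι → Bool) : Continuous (fingerprint p y) := by
  unfold fingerprint
  fun_prop

lemma abs_fingerprint_le (hp : ∀ j, p j ∈ Icc (1 / 3 : ℝ) (2 / 3))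
    (ha : ∀ j, a j ∈ Icc (0 : ℝ) 1) (y : ι → Bool) :
    |fingerprint p y a| ≤ Fintype.card ι := by
  have hterm (j : ι) : |(a j - p j) * taperedScore (p j) (y j)| ≤ 1 := by
    have hdist : |a j - p j| ≤ 1 := by
      rw [abs_le]
      constructor <;> linarith [(ha j).1, (ha j).2, (hp j).1, (hp j).2]
    rw [abs_mul]
    exact mul_le_one₀ hdist (abs_nonneg _) (abs_taperedScore_le (hp j) (y j))
  calc |fingerprint p y a| ≤ ∑ j, |(a j - p j) * taperedScore (p j) (y j)| :=
        Finset.abs_sum_le_sum_abs _ _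
    _ ≤ ∑ _j : ι, 1 := Finset.sum_le_sum fun j _ => hterm j
    _ = Fintype.card ι := by simp

lemma sum_bernoulliMass_mul_mul_taperedScore {t : ℝ} (ht : t ∈ Ioo (0 : ℝ) 1) (c : ℝ) :
    ∑ b, bernoulliMass t b * (c * taperedScore t b) = 0 := by
  simp only [mul_left_comm _ c, ← Finset.mul_sum, sum_bernoulliMass_mul_taperedScore ht, mul_zero]

variable [DecidableEq ι]

lemma sum_prodBernoulliMass_mul_fingerprint (hp : ∀ j, p j ∈ Ioo (0 : ℝ) 1) (a : ι → ℝ) :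
    ∑ y, prodBernoulliMass p y * fingerprint p y a = 0 := by
  simp only [fingerprint, Finset.mul_sum]
  rw [Finset.sum_comm]
  refine Finset.sum_eq_zero fun j _ => ?_
  rw [sum_productMass_mul_apply (fun j => sum_bernoulliMass (p j)) j
    fun b => (a j - p j) * taperedScore (p j) b]
  exact sum_bernoulliMass_mul_mul_taperedScore (hp j) _

lemma sum_prodBernoulliMass_mul_fingerprint_sq_le (hp : ∀ j, p j ∈ Icc (1 / 3 : ℝ) (2 / 3))
    (a : ι → ℝ) :
    ∑ y, prodBernoulliMass p y * fingerprint p y a ^ 2 ≤ ∑ j, (a j - p j) ^ 2 := by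
  unfold fingerprint
  rw [sum_productMass_mul_sum_sq (fun j => sum_bernoulliMass (p j))
    (f := fun j b => (a j - p j) * taperedScore (p j) b)
    fun j => sum_bernoulliMass_mul_mul_taperedScore (Icc_third_subset_Ioo (hp j)) _]
  gcongr with j _
  have hmass (b : Bool) : 0 ≤ bernoulliMass (p j) b :=
    bernoulliMass_nonneg (Ioo_subset_Icc_self (Icc_third_subset_Ioo (hp j))) b
  have hscore (b : Bool) : taperedScore (p j) b ^ 2 ≤ 1 :=
    (sq_le_one_iff_abs_le_one _).2 (abs_taperedScore_le (hp j) b)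
  calc ∑ b, bernoulliMass (p j) b * ((a j - p j) * taperedScore (p j) b) ^ 2
      ≤ ∑ b, bernoulliMass (p j) b * (a j - p j) ^ 2 := by
        refine Finset.sum_le_sum fun b _ => mul_le_mul_of_nonneg_left ?_ (hmass b)
        rw [mul_pow]
        exact mul_le_of_le_one_right (sq_nonneg _) (hscore b)
    _ = (a j - p j) ^ 2 := by rw [← Finset.sum_mul, sum_bernoulliMass, one_mul]

end Fingerprint

section Risk

lemma integrable_of_ae_mem_Icc {ι : Type*} [Finite ι] {μ : Measure (ι → ℝ)} [IsFiniteMeasure μ]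
    (hμ : ∀ᵐ a ∂μ, ∀ j, a j ∈ Icc (0 : ℝ) 1) {f : (ι → ℝ) → ℝ} (hf : Continuous f) :
    Integrable f μ :=
  integrable_of_ae_mem_isCompact (isCompact_univ_pi fun _ => isCompact_Icc)
    (by simpa only [mem_univ_pi] using hμ) hf.continuousOn

variable {ι : Type*} [Fintype ι] {n : ℕ} {p : ι → ℝ} {μ : Measure (ι → ℝ)}
  {M : (Fin n → ι → Bool) → Measure (ι → ℝ)} {ε δ α : ℝ}

lemma integral_sum_sub_sq [IsProbabilityMeasure μ] (hμ : ∀ᵐ a ∂μ, ∀ j, a j ∈ Icc (0 : ℝ) 1)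
    (p : ι → ℝ) :
    ∫ a, ∑ j, (a j - p j) ^ 2 ∂μ =
      ∑ j, (∫ a, a j ^ 2 ∂μ - 2 * p j * ∫ a, a j ∂μ + p j ^ 2) := by
  have hint {f : (ι → ℝ) → ℝ} (hf : Continuous f) : Integrable f μ := integrable_of_ae_mem_Icc hμ hf
  rw [integral_finsetSum _ fun j _ => hint (by fun_prop)]
  refine Finset.sum_congr rfl fun j _ => ?_
  calc ∫ a, (a j - p j) ^ 2 ∂μ = ∫ a, (a j ^ 2 - 2 * p j * a j + p j ^ 2) ∂μ := by
        congr with a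
        ring
    _ = ∫ a, a j ^ 2 ∂μ - 2 * p j * ∫ a, a j ∂μ + p j ^ 2 := by
        rw [integral_add (hint (by fun_prop)) (by simp), integral_sub (hint (by fun_prop))
          (hint (by fun_prop)), integral_const_mul]
        simp

lemma sum_sq_sub_integral_le [IsProbabilityMeasure μ] (hμ : ∀ᵐ a ∂μ, ∀ j, a j ∈ Icc (0 : ℝ) 1)
    (p : ι → ℝ) :
    ∑ j, (p j ^ 2 - 1 / 4) - ∫ a, ∑ j, (a j - p j) ^ 2 ∂μ ≤
      ∑ j, (∫ a, a j ∂μ) * (2 * p j - 1) := by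
  have hmean (j : ι) : ∫ a, a j ∂μ ≤ ∫ a, a j ^ 2 ∂μ + 1 / 4 := by
    have hsq : Integrable (fun a : ι → ℝ => a j ^ 2) μ := integrable_of_ae_mem_Icc hμ (by fun_prop)
    calc ∫ a, a j ∂μ ≤ ∫ a, (a j ^ 2 + 1 / 4) ∂μ :=
          integral_mono (integrable_of_ae_mem_Icc hμ (by fun_prop))
            (hsq.add (integrable_const _)) fun a => by linarith [sq_nonneg (a j - 1 / 2)]
      _ = ∫ a, a j ^ 2 ∂μ + 1 / 4 := by simp [integral_add hsq]
  rw [integral_sum_sub_sq hμ, ← Finset.sum_sub_distrib]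
  exact Finset.sum_le_sum fun j _ => by linarith [hmean j]

lemma integral_fingerprint [IsProbabilityMeasure μ] (hμ : ∀ᵐ a ∂μ, ∀ j, a j ∈ Icc (0 : ℝ) 1)
    (p : ι → ℝ) (y : ι → Bool) :
    ∫ a, fingerprint p y a ∂μ = ∑ j, (∫ a, a j ∂μ - p j) * taperedScore (p j) (y j) := by
  have hint {f : (ι → ℝ) → ℝ} (hf : Continuous f) : Integrable f μ := integrable_of_ae_mem_Icc hμ hf
  unfold fingerprint
  rw [integral_finsetSum _ fun j _ => hint (by fun_prop)]
  refine Finset.sum_congr rfl fun j _ => ?_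
  rw [integral_mul_const, integral_sub (hint (by fun_prop)) (integrable_const _)]
  simp

variable [DecidableEq ι]

lemma sum_sampleMass_mul_taperedScore (hp : ∀ j, p j ∈ Ioo (0 : ℝ) 1) (i : Fin n) (j : ι) :
    ∑ X, sampleMass p X * taperedScore (p j) (X i j) = 0 := by
  rw [sum_productMass_mul_apply (fun _ => sum_prodBernoulliMass p) i
      fun y => taperedScore (p j) (y j),
    sum_productMass_mul_apply (fun j => sum_bernoulliMass (p j)) j,
    sum_bernoulliMass_mul_taperedScore (hp j)]

lemma sum_sampleMass_mul_integral_fingerprint [∀ X, IsProbabilityMeasure (M X)]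
    (hrange : ∀ X, ∀ᵐ a ∂M X, ∀ j, a j ∈ Icc (0 : ℝ) 1) (hp : ∀ j, p j ∈ Ioo (0 : ℝ) 1) :
    ∑ i, ∑ X, sampleMass p X * ∫ a, fingerprint p (X i) a ∂M X =
      ∑ X, ∑ j, (∫ a, a j ∂M X) * (sampleMass p X * ∑ i, taperedScore (p j) (X i j)) := by
  have hone (i : Fin n) : ∑ X, sampleMass p X * ∫ a, fingerprint p (X i) a ∂M X =
      ∑ X, ∑ j, (∫ a, a j ∂M X) * (sampleMass p X * taperedScore (p j) (X i j)) := by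
    have hcentered : ∑ X, ∑ j, p j * (sampleMass p X * taperedScore (p j) (X i j)) = 0 := by
      rw [Finset.sum_comm]
      simp only [← Finset.mul_sum, sum_sampleMass_mul_taperedScore hp, mul_zero,
        Finset.sum_const_zero]
    rw [← sub_zero (∑ X, ∑ j, _), ← hcentered]
    simp only [integral_fingerprint (hrange _), ← Finset.sum_sub_distrib, Finset.mul_sum]
    exact Finset.sum_congr rfl fun X _ => Finset.sum_congr rfl fun j _ => by ring
  simp only [hone, Finset.mul_sum]
  rw [Finset.sum_comm]
  exact Finset.sum_congr rfl fun X _ => Finset.sum_comm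

/-- Mean squared error of the mechanism `M` on independent samples from the product Bernoulli
distribution with mean vector `p`. -/
def meanSqError (M : (Fin n → ι → Bool) → Measure (ι → ℝ)) (p : ι → ℝ) : ℝ :=
  ∑ X, sampleMass p X * ∫ a, ∑ j, (a j - p j) ^ 2 ∂M X

lemma continuous_meanSqError [∀ X, IsProbabilityMeasure (M X)]
    (hrange : ∀ X, ∀ᵐ a ∂M X, ∀ j, a j ∈ Icc (0 : ℝ) 1) : Continuous (meanSqError M) := by
  unfold meanSqError
  simp only [integral_sum_sub_sq (hrange _)]
  exact continuous_finsetSum _ fun X _ => (continuous_sampleMass X).mul (by fun_prop)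

lemma integral_meanSqError {d : ℕ} (M : (Fin n → Fin d → Bool) → Measure (Fin d → ℝ)) :
    ∫ p, meanSqError M p ∂uniformPrior (Fin d) =
      ∫ p, ∫ X, ∫ a, ∑ j, (a j - p j) ^ 2 ∂M X ∂Measure.pi (fun _ : Fin n => prodBernoulli p)
        ∂uniformPrior (Fin d) := by
  refine integral_congr_ae (ae_uniformPrior_mem.mono fun p hp => ?_)
  exact (integral_pi_prodBernoulli
    (fun j => Ioo_subset_Icc_self (Icc_third_subset_Ioo (hp j (mem_univ j)))) _).symm

lemma sum_sq_sub_meanSqError_le [∀ X, IsProbabilityMeasure (M X)]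
    (hrange : ∀ X, ∀ᵐ a ∂M X, ∀ j, a j ∈ Icc (0 : ℝ) 1) (hp : ∀ j, p j ∈ Icc (0 : ℝ) 1) :
    ∑ j, (p j ^ 2 - 1 / 4) - meanSqError M p ≤
      ∑ X, ∑ j, (∫ a, a j ∂M X) * (sampleMass p X * (2 * p j - 1)) :=
  calc ∑ j, (p j ^ 2 - 1 / 4) - meanSqError M p
      = ∑ X, sampleMass p X *
          (∑ j, (p j ^ 2 - 1 / 4) - ∫ a, ∑ j, (a j - p j) ^ 2 ∂M X) := by
        simp only [mul_sub, Finset.sum_sub_distrib (f := fun X => sampleMass p X * _),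
          ← Finset.sum_mul, sum_sampleMass, one_mul, meanSqError]
    _ ≤ ∑ X, sampleMass p X * ∑ j, (∫ a, a j ∂M X) * (2 * p j - 1) := by
        gcongr with X _
        · exact sampleMass_nonneg hp X
        · exact sum_sq_sub_integral_le (hrange X) p
    _ = ∑ X, ∑ j, (∫ a, a j ∂M X) * (sampleMass p X * (2 * p j - 1)) := by
        simp only [Finset.mul_sum, mul_left_comm]

lemma card_div_sub_integral_meanSqError_le [∀ X, IsProbabilityMeasure (M X)]
    (hrange : ∀ X, ∀ᵐ a ∂M X, ∀ j, a j ∈ Icc (0 : ℝ) 1) :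
    (Fintype.card ι : ℝ) / 108 - ∫ p, meanSqError M p ∂uniformPrior ι ≤
      ∫ p, ∑ X, ∑ j, (∫ a, a j ∂M X) * (sampleMass p X * (2 * p j - 1)) ∂uniformPrior ι := by
  have hrisk := integrable_uniformPrior (continuous_meanSqError hrange).continuousOn
  have hsq : Integrable (fun p => ∑ j, (p j ^ 2 - 1 / 4)) (uniformPrior ι) :=
    integrable_uniformPrior (by fun_prop)
  calc (Fintype.card ι : ℝ) / 108 - ∫ p, meanSqError M p ∂uniformPrior ι
      = ∫ p, (∑ j, (p j ^ 2 - 1 / 4) - meanSqError M p) ∂uniformPrior ι := by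
        rw [integral_sub hsq hrisk,
          integral_finsetSum _ fun j _ => integrable_uniformPrior (by fun_prop)]
        simp only [integral_uniformPrior_sq_sub, Finset.sum_const, Finset.card_univ, nsmul_eq_mul,
          mul_one_div]
    _ ≤ _ := by
        refine integral_mono_ae (hsq.sub hrisk) (integrable_uniformPrior ?_) ?_
        · exact continuousOn_finsetSum _ fun X _ => continuousOn_finsetSum _ fun j _ =>
            (continuous_const.mul ((continuous_sampleMass X).mul (by fun_prop))).continuousOn
        · filter_upwards [ae_uniformPrior_mem] with p hp
          exact sum_sq_sub_meanSqError_le hrange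
            fun j => Ioo_subset_Icc_self (Icc_third_subset_Ioo (hp j (mem_univ j)))

lemma IsDP.sum_sampleMass_mul_integral_fingerprint_le [∀ X, IsProbabilityMeasure (M X)]
    (hM : IsDP M ε δ) (hrange : ∀ X, ∀ᵐ a ∂M X, ∀ j, a j ∈ Icc (0 : ℝ) 1) (hε : 0 ≤ ε)
    (hδ : 0 ≤ δ) (hα : 0 < α) (hp : ∀ j, p j ∈ Icc (1 / 3 : ℝ) (2 / 3)) :
    ∑ i, ∑ X, sampleMass p X * ∫ a, fingerprint p (X i) a ∂M X ≤
      n * ((Real.exp ε - 1) * (meanSqError M p / (2 * α) + α / 2) +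
        2 * δ * Fintype.card ι) := by
  have hp_Ioo (j : ι) : p j ∈ Ioo (0 : ℝ) 1 := Icc_third_subset_Ioo (hp j)
  have hp_Icc (j : ι) : p j ∈ Icc (0 : ℝ) 1 := Ioo_subset_Icc_self (hp_Ioo j)
  have hexp : 0 ≤ Real.exp ε - 1 := sub_nonneg.2 (Real.one_le_exp hε)
  have hone (i : Fin n) : ∑ X, sampleMass p X * ∫ a, fingerprint p (X i) a ∂M X ≤
      (Real.exp ε - 1) * (meanSqError M p / (2 * α) + α / 2) + 2 * δ * Fintype.card ι := by
    refine (hM.sum_productMass_mul_integral_le_of_centered hε hδ (Nat.cast_nonneg _) hα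
      (fun _ => prodBernoulliMass_nonneg hp_Icc) (fun _ => sum_prodBernoulliMass p)
      (fun y => (continuous_fingerprint p y).measurable)
      (fun X y => (hrange X).mono fun a ha => abs_fingerprint_le hp ha y) i
      (sum_prodBernoulliMass_mul_fingerprint hp_Ioo)).trans ?_
    unfold meanSqError
    gcongr with X _
    · exact sampleMass_nonneg hp_Icc X
    · exact integrable_of_ae_mem_Icc (hrange X) (continuous_finsetSum _ fun y _ =>
        ((continuous_fingerprint p y).pow 2).const_mul _)
    · exact integrable_of_ae_mem_Icc (hrange X) (by fun_prop)
    · exact sum_prodBernoulliMass_mul_fingerprint_sq_le hp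
  calc ∑ i, ∑ X, sampleMass p X * ∫ a, fingerprint p (X i) a ∂M X
      ≤ ∑ _i : Fin n, ((Real.exp ε - 1) * (meanSqError M p / (2 * α) + α / 2) +
          2 * δ * Fintype.card ι) := Finset.sum_le_sum fun i _ => hone i
    _ = _ := by rw [Finset.sum_const, Finset.card_univ, Fintype.card_fin, nsmul_eq_mul]

lemma integral_sum_mul_sampleMass_mul_sum_taperedScore (m : (Fin n → ι → Bool) → ι → ℝ) :
    ∫ p, ∑ X, ∑ j, m X j * (sampleMass p X * ∑ i, taperedScore (p j) (X i j)) ∂uniformPrior ι =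
      ∫ p, ∑ X, ∑ j, m X j * (sampleMass p X * (2 * p j - 1)) ∂uniformPrior ι := by
  have hlinear {F : (Fin n → ι → Bool) → ι → (ι → ℝ) → ℝ}
      (hF : ∀ X j, Integrable (F X j) (uniformPrior ι)) :
      ∫ p, ∑ X, ∑ j, m X j * F X j p ∂uniformPrior ι =
        ∑ X, ∑ j, m X j * ∫ p, F X j p ∂uniformPrior ι := by
    have hint (X j) : Integrable (fun p => m X j * F X j p) (uniformPrior ι) :=
      (hF X j).const_mul _
    simp only [integral_finsetSum _ fun X _ => integrable_finsetSum _ fun j _ => hint X j,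
      integral_finsetSum _ fun j _ => hint _ j, integral_const_mul]
  have hdrift (X : Fin n → ι → Bool) (j : ι) :
      Integrable (fun p => sampleMass p X * (2 * p j - 1)) (uniformPrior ι) :=
    integrable_uniformPrior ((continuous_sampleMass X).mul (by fun_prop)).continuousOn
  rw [hlinear integrable_sampleMass_mul_sum_taperedScore, hlinear hdrift]
  simp only [integral_uniformPrior_sampleMass_mul_sum_taperedScore]

lemma IsDP.integral_sum_sampleMass_mul_taperedScore_le [∀ X, IsProbabilityMeasure (M X)]
    (hM : IsDP M ε δ) (hrange : ∀ X, ∀ᵐ a ∂M X, ∀ j, a j ∈ Icc (0 : ℝ) 1) (hε : 0 ≤ ε)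
    (hδ : 0 ≤ δ) (hα : 0 < α) :
    ∫ p, ∑ X, ∑ j, (∫ a, a j ∂M X) * (sampleMass p X * ∑ i, taperedScore (p j) (X i j))
        ∂uniformPrior ι ≤
      n * ((Real.exp ε - 1) * ((∫ p, meanSqError M p ∂uniformPrior ι) / (2 * α) + α / 2) +
        2 * δ * Fintype.card ι) := by
  have hrisk := integrable_uniformPrior (continuous_meanSqError hrange).continuousOn
  have hbound : Integrable (fun p => (Real.exp ε - 1) * (meanSqError M p / (2 * α) + α / 2))
      (uniformPrior ι) := ((hrisk.div_const _).add (integrable_const _)).const_mul _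
  calc ∫ p, ∑ X, ∑ j, (∫ a, a j ∂M X) * (sampleMass p X * ∑ i, taperedScore (p j) (X i j))
        ∂uniformPrior ι
      ≤ ∫ p, n * ((Real.exp ε - 1) * (meanSqError M p / (2 * α) + α / 2) +
          2 * δ * Fintype.card ι) ∂uniformPrior ι := by
        refine integral_mono_ae (integrable_finsetSum _ fun X _ => integrable_finsetSum _ fun j _ =>
          (integrable_sampleMass_mul_sum_taperedScore X j).const_mul _)
          ((hbound.add (integrable_const _)).const_mul _) ?_
        filter_upwards [ae_uniformPrior_mem] with p hp
        have hp_Icc (j : ι) := hp j (mem_univ j)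
        rw [← sum_sampleMass_mul_integral_fingerprint hrange
          fun j => Icc_third_subset_Ioo (hp_Icc j)]
        exact hM.sum_sampleMass_mul_integral_fingerprint_le hrange hε hδ hα hp_Icc
    _ = _ := by
        rw [integral_const_mul, integral_add hbound (integrable_const _), integral_const_mul,
          integral_add (hrisk.div_const _) (integrable_const _), integral_div]
        simp only [integral_const, probReal_univ, one_smul]

lemma IsDP.card_div_le [∀ X, IsProbabilityMeasure (M X)]
    (hM : IsDP M ε δ) (hrange : ∀ X, ∀ᵐ a ∂M X, ∀ j, a j ∈ Icc (0 : ℝ) 1) (hε : 0 ≤ ε)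
    (hδ : 0 ≤ δ) (hα : 0 < α) (hrisk : ∫ p, meanSqError M p ∂uniformPrior ι ≤ α ^ 2) :
    (Fintype.card ι : ℝ) / 108 ≤
      α ^ 2 + n * ((Real.exp ε - 1) * α + 2 * δ * Fintype.card ι) := by
  have hexp : 0 ≤ Real.exp ε - 1 := sub_nonneg.2 (Real.one_le_exp hε)
  have hroot : (∫ p, meanSqError M p ∂uniformPrior ι) / (2 * α) + α / 2 ≤ α := by
    have hdiv : (∫ p, meanSqError M p ∂uniformPrior ι) / (2 * α) ≤ α / 2 := by
      rw [div_le_iff₀ (by positivity)]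
      linarith
    linarith
  have hlower := card_div_sub_integral_meanSqError_le hrange
  rw [← integral_sum_mul_sampleMass_mul_sum_taperedScore] at hlower
  have hupper : n * ((Real.exp ε - 1) *
        ((∫ p, meanSqError M p ∂uniformPrior ι) / (2 * α) + α / 2) + 2 * δ * Fintype.card ι) ≤
      n * ((Real.exp ε - 1) * α + 2 * δ * Fintype.card ι) := by gcongr
  linarith [hM.integral_sum_sampleMass_mul_taperedScore_le hrange hε hδ hα]

end Risk

lemma div_mul_le_of_div_le_add {d n : ℕ} {α ε δ : ℝ} (hα : 0 < α)
    (hαd : α ≤ 1 / 18 * Real.sqrt d) (hε : 0 ≤ ε) (hε1 : ε ≤ 1) (hδn : δ ≤ 1 / 648 / n)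
    (h : (d : ℝ) / 108 ≤ α ^ 2 + n * ((Real.exp ε - 1) * α + 2 * δ * d)) :
    1 / 648 * (d : ℝ) / (α * ε) ≤ n := by
  obtain rfl | hε0 := hε.eq_or_lt
  · simp -- the left side is `0` because `x / 0 = 0`
  have hα_sq : α ^ 2 ≤ (d : ℝ) / 324 := by
    calc α ^ 2 ≤ (1 / 18 * Real.sqrt d) ^ 2 := by gcongr
      _ = (d : ℝ) / 324 := by rw [mul_pow, Real.sq_sqrt (Nat.cast_nonneg d)]; ring
  have hexp : Real.exp ε - 1 ≤ 2 * ε := by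
    have habs := Real.abs_exp_sub_one_le (x := ε) (by rwa [abs_of_nonneg hε])
    rw [abs_of_nonneg hε] at habs
    exact (le_abs_self _).trans habs
  have hδ : n * δ ≤ 1 / 648 := by
    obtain rfl | hn := n.eq_zero_or_pos
    · norm_num
    · rwa [mul_comm, ← le_div_iff₀ (by positivity)]
  have hprivacy : (n : ℝ) * ((Real.exp ε - 1) * α) ≤ n * (2 * ε * α) := by gcongr
  have hfailure : n * δ * d ≤ 1 / 648 * d := by gcongr
  rw [div_le_iff₀ (by positivity)]
  linarith

theorem private_product_bernoulli_mean_lower_bound_general {d n : ℕ} {α ε δ : ℝ} (hα : 0 < α)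
    (hαd : α ≤ 1 / 18 * Real.sqrt d) (hε : 0 ≤ ε) (hε1 : ε ≤ 1) (hδ : 0 ≤ δ)
    (hδn : δ ≤ 1 / 648 / n) {M : (Fin n → Fin d → Bool) → Measure (Fin d → ℝ)}
    [∀ X, IsProbabilityMeasure (M X)] (hM : IsDP M ε δ)
    (hrange : ∀ X, ∀ᵐ a ∂M X, ∀ j, a j ∈ Icc (0 : ℝ) 1)
    (hrisk : ∫ p, ∫ X, ∫ a, ∑ j, (a j - p j) ^ 2 ∂M X
      ∂Measure.pi (fun _ : Fin n => prodBernoulli p) ∂uniformPrior (Fin d) ≤ α ^ 2) :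
    1 / 648 * (d : ℝ) / (α * ε) ≤ n := by
  rw [← integral_meanSqError] at hrisk
  have hbound := hM.card_div_le hrange hε hδ hα hrisk
  rw [Fintype.card_fin] at hbound
  exact div_mul_le_of_div_le_add hα hαd hε hε1 hδn hbound

/-- **Lower bound for private mean estimation of binary product distributions.**
There is a prior `D` on mean vectors `p ∈ [1/3, 2/3]^d` and universal constants
`c₁, c₂, c₃ > 0` such that any `(ε,δ)`-DP mechanism (with `ε, δ ∈ [0,1]`,
`δ ≤ c₂/n`) whose mean-squared `ℓ₂` error on `n` i.i.d. samples from the product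
Bernoulli distribution with mean `p` is at most `α²` with `0 < α ≤ c₁√d` must have
`n ≥ c₃·d/(αε)`. -/
theorem private_product_bernoulli_mean_lower_bound :
    ∃ c₁ c₂ c₃ : ℝ, 0 < c₁ ∧ 0 < c₂ ∧ 0 < c₃ ∧
      ∀ d : ℕ, 0 < d →
        ∃ D : Measure (Fin d → ℝ), IsProbabilityMeasure D ∧
          (∀ᵐ p ∂D, ∀ j, p j ∈ Icc ((1 : ℝ) / 3) ((2 : ℝ) / 3)) ∧
          ∀ n : ℕ, ∀ α ε δ : ℝ,
            0 < α → α ≤ c₁ * Real.sqrt d → 0 ≤ ε → ε ≤ 1 → 0 ≤ δ → δ ≤ 1 →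
            δ ≤ c₂ / (n : ℝ) →
            ∀ M : (Fin n → Fin d → Bool) → Measure (Fin d → ℝ),
              (∀ x, IsProbabilityMeasure (M x)) →
              IsDP M ε δ →
              (∀ x, ∀ᵐ a ∂(M x), ∀ j, a j ∈ Icc ((1 : ℝ) / 3) ((2 : ℝ) / 3)) →
              (∫ p, ∫ X, ∫ a, (∑ j, (a j - p j) ^ 2)
                  ∂(M X) ∂(Measure.pi fun _ : Fin n => prodBernoulli p) ∂D) ≤ α ^ 2 →
              c₃ * (d : ℝ) / (α * ε) ≤ (n : ℝ) := by
  have hsub : Icc (1 / 3 : ℝ) (2 / 3) ⊆ Icc 0 1 := Icc_subset_Icc (by norm_num) (by norm_num)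
  refine ⟨1 / 18, 1 / 648, 1 / 648, by norm_num, by norm_num, by norm_num, fun d _ =>
    ⟨uniformPrior (Fin d), inferInstance, by simpa only [mem_univ_pi] using ae_uniformPrior_mem,
      fun n α ε δ hα hαd hε hε1 hδ _ hδn M _ hM hrange hrisk => ?_⟩⟩
  exact private_product_bernoulli_mean_lower_bound_general hα hαd hε hε1 hδ hδn hM
    (fun X => (hrange X).mono fun a ha j => hsub (ha j)) hrisk
end
end
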